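/- Rescaled representation of the homogenized energy density (Corollary 3.4 of the paper): assume Assumption H. For every F ∈ ℝ^{n×d} there exists a set Ω_F ∈ ℱ with ℙ(Ω_F) = 1 such that for every ω ∈ Ω_F and every closed axis-parallel box Q = Π_{i=1}^d [a_i,b_i] with a_i < b_i for all i, lim_{ε↓0} ε^d · m_F(ω; ε^{−1}Q) = |Q| · W₀(F). -/

import Mathlib

open MeasureTheory Filter Metric Set
open scoped Classical
open scoped ENNReal Topology Pointwise

noncomputable section

namespace StochHom

/-- `ℝ^d` with the Euclidean norm. -/
abbrev Rd (d : ℕ) : Type := EuclideanSpace ℝ (Fin d)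

/-- `ℝ^n` with the Euclidean norm. -/
abbrev Rn (n : ℕ) : Type := EuclideanSpace ℝ (Fin n)

/-- The lattice `ℤ^d`. -/
abbrev Zd (d : ℕ) : Type := Fin d → ℤ

variable {d n : ℕ}

/-- The embedding of the lattice `ℤ^d` into `ℝ^d`. -/
def toRd (z : Zd d) : Rd d := (EuclideanSpace.equiv (Fin d) ℝ).symm fun i => (z i : ℝ)

/-- The standard basis vectors `eᵢ` of `ℤ^d`. -/
def stdb (i : Fin d) : Zd d := fun j => if j = i then 1 else 0

/-- The interaction range `R = max {4√d, max_{b ∈ ℰ₀} |b|}`. -/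
def irange (d : ℕ) (E0 : Finset (Zd d)) : ℝ :=
  max (4 * Real.sqrt d) (sSup ((fun b : Zd d => ‖toRd b‖) '' (E0 : Set (Zd d))))

variable {Ω : Type*} [MeasurableSpace Ω]

/-- The energy `E₁(ω; u, ℤ^d ∩ A)`. -/
def energy1 (τ : Zd d → Ω → Ω) (E0 : Finset (Zd d)) (V : Zd d → Ω → Rn n → ℝ)
    (ω : Ω) (u : Zd d → Rn n) (A : Set (Rd d)) : ℝ :=
  ∑' z : Zd d, if toRd z ∈ A then
      ∑ b ∈ E0, V b (τ z ω) ((‖toRd b‖)⁻¹ • (u (z + b) - u z)) else 0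

/-- The scaled energy `E_ε(ω; u, A)`, where a function `u : εℤ^d → ℝ^n` is identified with a
function on `ℤ^d` via `z ↦ u(εz)`, so that `∂_b^ε u (z) = (u (z+b) - u z)/(ε |b|)`. -/
def energyE (τ : Zd d → Ω → Ω) (E0 : Finset (Zd d)) (V : Zd d → Ω → Rn n → ℝ)
    (ε : ℝ) (ω : Ω) (u : Zd d → Rn n) (A : Set (Rd d)) : ℝ :=
  ε ^ d * ∑' z : Zd d, if ε • toRd z ∈ A then
      ∑ b ∈ E0, V b (τ z ω) ((ε * ‖toRd b‖)⁻¹ • (u (z + b) - u z)) else 0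

/-- The localized minimal energy `m_F(ω; A)`. -/
def mF (τ : Zd d → Ω → Ω) (E0 : Finset (Zd d)) (V : Zd d → Ω → Rn n → ℝ)
    (ω : Ω) (F : Rd d →L[ℝ] Rn n) (A : Set (Rd d)) : ℝ :=
  ⨅ φ : {φ : Zd d → Rn n // ∀ z : Zd d, infDist (toRd z) Aᶜ ≤ irange d E0 → φ z = 0},
    energy1 τ E0 V ω (fun z => F (toRd z) + φ.1 z) A

/-- The half-open cube `[0,k)^d ⊂ ℝ^d`. -/
def cube (d k : ℕ) : Set (Rd d) := {x | ∀ i, 0 ≤ x i ∧ x i < (k : ℝ)}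

/-- The homogenized energy density `W₀(F) = inf_{k ≥ 1} k⁻ᵈ E[m_F(·, [0,k)^d)]`. -/
def W0 (P : Measure Ω) (τ : Zd d → Ω → Ω) (E0 : Finset (Zd d))
    (V : Zd d → Ω → Rn n → ℝ) (F : Rd d →L[ℝ] Rn n) : ℝ :=
  ⨅ k : {k : ℕ // 0 < k}, (((k : ℕ) : ℝ) ^ d)⁻¹ * ∫ ω, mF τ E0 V ω F (cube d k) ∂P

/-- Half-open axis-parallel box `Π_i [aᵢ, bᵢ)`. -/
def halfBox (a b : Fin d → ℝ) : Set (Rd d) := {x | ∀ i, a i ≤ x i ∧ x i < b i}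

/-- Open axis-parallel box `Π_i (aᵢ, bᵢ)`. -/
def openBox (a b : Fin d → ℝ) : Set (Rd d) := {x | ∀ i, a i < x i ∧ x i < b i}

/-- Closed axis-parallel box `Π_i [aᵢ, bᵢ]`. -/
def closedBox (a b : Fin d → ℝ) : Set (Rd d) := {x | ∀ i, a i ≤ x i ∧ x i ≤ b i}

/-- Half-open axis-parallel box with integer corners. -/
def intBox (a b : Zd d) : Set (Rd d) := {x | ∀ i, (a i : ℝ) ≤ x i ∧ x i < (b i : ℝ)}

/-- The periodic cell minimization `W^{(k)}(ω; F)`. -/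
def Wper (τ : Zd d → Ω → Ω) (E0 : Finset (Zd d)) (V : Zd d → Ω → Rn n → ℝ)
    (k : ℕ) (ω : Ω) (F : Rd d →L[ℝ] Rn n) : ℝ :=
  ⨅ φ : {φ : Zd d → Rn n // ∀ z z' : Zd d, φ (z + k • z') = φ z},
    ((k : ℝ) ^ d)⁻¹ * energy1 τ E0 V ω (fun z => F (toRd z) + φ.1 z) (cube d k)

/-!
Evaluate `m_F(ω; ·)` on the unions of unit cubes `z + [0, 1)ᵈ`, `z ∈ S`, for finite `S ⊂ ℤᵈ`.
Admissible perturbations vanish within the interaction range of the boundary, so those of disjoint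
sets can be glued: this gives a stationary nonnegative subadditive process in `S`, dominated by the
energy of the affine function, whose time constant is `W₀(F)`.

The subadditive ergodic theorem along arbitrary families of expanding boxes rests on a maximal
inequality for superadditive processes, a consequence of Vitali's covering lemma. The amount by
which a subadditive process falls short of its mean over the `kᵈ` tilings by cubes of side `k` is
itself superadditive, with a density that is small for a suitable `k`; and the mean over the tilings
is an average along the orbit, to which the pointwise ergodic theorem applies. The latter follows
from the same maximal inequality and the density in `L²` of constants and coboundaries.

Finally, `ε⁻¹ Q` contains, and is contained in, unions of unit cubes with the same asymptotic
volume, and the affine energy of the remaining shell is negligible.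
-/

/-! ### Boxes in the lattice -/

/-- The centred lattice cube `{-N, …, N}ᵈ`. -/
def centeredCube (d N : ℕ) : Finset (Zd d) := Finset.Icc (fun _ => -(N : ℤ)) fun _ => N

lemma vadd_Icc (w a b : Zd d) : w +ᵥ Finset.Icc a b = Finset.Icc (w + a) (w + b) :=
  Finset.image_add_left_Icc a b w

lemma sum_vadd_finset (w : Zd d) (S : Finset (Zd d)) (f : Zd d → ℝ) :
    ∑ z ∈ w +ᵥ S, f z = ∑ z ∈ S, f (w + z) :=
  Finset.sum_image fun _ _ _ _ h => add_left_cancel h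

lemma Icc_inter_Icc (a b a' b' : Zd d) :
    Finset.Icc a b ∩ Finset.Icc a' b' = Finset.Icc (a ⊔ a') (b ⊓ b') := by
  rw [← Finset.coe_inj]
  push_cast
  exact Set.Icc_inter_Icc

lemma coe_vadd_centeredCube (z : Zd d) (N : ℕ) :
    ((z +ᵥ centeredCube d N : Finset (Zd d)) : Set (Zd d)) = closedBall z N := by
  rw [centeredCube, vadd_Icc, Finset.coe_Icc, closedBall_pi z N.cast_nonneg, ← Set.pi_univ_Icc]
  refine congrArg _ (funext fun i => ?_)
  rw [Int.closedBall_eq_Icc, Int.floor_add_natCast, Int.ceil_sub_natCast, Int.floor_intCast,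
    Int.ceil_intCast]
  rfl

lemma coe_centeredCube (N : ℕ) : (centeredCube d N : Set (Zd d)) = closedBall 0 N := by
  rw [← coe_vadd_centeredCube, zero_vadd]

lemma card_centeredCube (N : ℕ) : (centeredCube d N).card = (2 * N + 1) ^ d := by
  have h : ((N : ℤ) + 1 + N).toNat = 2 * N + 1 := by omega
  simp [centeredCube, Pi.card_Icc, h]

lemma card_centeredCube_pos (N : ℕ) : (0 : ℝ) < (centeredCube d N).card := by
  rw [card_centeredCube]
  positivity

lemma centeredCube_mono : Monotone (centeredCube d) := fun _ _ h =>
  Finset.Icc_subset_Icc (fun _ => neg_le_neg (Int.ofNat_le.2 h)) fun _ => Int.ofNat_le.2 h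

lemma centeredCube_add (N k : ℕ) :
    centeredCube d (N + k) = Finset.Icc (-N - k : Zd d) (N + k : Zd d) := by
  rw [centeredCube]
  congr 1
  ext i
  simp [sub_eq_neg_add]

lemma tendsto_card_centeredCube_add_div_card (d K : ℕ) :
    Tendsto (fun N : ℕ => ((centeredCube d (N + K)).card : ℝ) / (centeredCube d N).card) atTop
      (𝓝 1) := by
  have h : Tendsto (fun N : ℕ => (1 + (2 * K : ℝ) / (2 * N + 1)) ^ d) atTop (𝓝 ((1 + 0) ^ d)) :=
    (tendsto_const_nhds.add <| tendsto_const_nhds.div_atTop <| tendsto_atTop_add_const_right _ _ <|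
      tendsto_natCast_atTop_atTop.const_mul_atTop two_pos).pow d
  rw [add_zero, one_pow] at h
  refine h.congr fun N => ?_
  rw [card_centeredCube, card_centeredCube]
  push_cast
  rw [← div_pow]
  congr 1
  field_simp
  ring

/-- The path `A` in the lattice has asymptotic velocity `a`, that is, `A t / t → a`. -/
def HasSlope (A : ℝ → Zd d) (a : Fin d → ℝ) : Prop :=
  ∀ i, Tendsto (fun t => (A t i : ℝ) / t) atTop (𝓝 (a i))

lemma hasSlope_of_abs_sub_le {A : ℝ → Zd d} {a : Fin d → ℝ} {C : ℝ}
    (h : ∀ t i, |(A t i : ℝ) - t * a i| ≤ C) : HasSlope A a := by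
  intro i
  have h0 : Tendsto (fun t : ℝ => C / t) atTop (𝓝 0) := tendsto_const_nhds.div_atTop tendsto_id
  refine tendsto_iff_norm_sub_tendsto_zero.2 (squeeze_zero' (by simp) ?_ h0)
  filter_upwards [eventually_gt_atTop 0] with t ht
  rw [Real.norm_eq_abs, le_div_iff₀ ht, ← abs_of_pos ht, ← abs_mul, abs_of_pos ht, sub_mul,
    div_mul_cancel₀ _ ht.ne', mul_comm (a i)]
  exact h t i

lemma HasSlope.const_add {A : ℝ → Zd d} {a : Fin d → ℝ} (h : HasSlope A a) (w : Zd d) :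
    HasSlope (fun t => w + A t) a := fun i => by
  simpa [add_div] using ((tendsto_const_nhds (x := (w i : ℝ))).div_atTop tendsto_id).add (h i)

lemma HasSlope.add_const {A : ℝ → Zd d} {a : Fin d → ℝ} (h : HasSlope A a) (w : Zd d) :
    HasSlope (fun t => A t + w) a := by
  simpa only [add_comm w] using h.const_add w

lemma HasSlope.sub_const {A : ℝ → Zd d} {a : Fin d → ℝ} (h : HasSlope A a) (w : Zd d) :
    HasSlope (fun t => A t - w) a := by
  simpa only [sub_eq_add_neg] using h.add_const (-w)

lemma HasSlope.sup {A A' : ℝ → Zd d} {a a' : Fin d → ℝ} (h : HasSlope A a) (h' : HasSlope A' a') :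
    HasSlope (fun t => A t ⊔ A' t) (a ⊔ a') := fun i => by
  refine ((h i).max (h' i)).congr' ?_
  filter_upwards [eventually_ge_atTop 0] with t ht
  simp [max_div_div_right ht]

lemma HasSlope.inf {A A' : ℝ → Zd d} {a a' : Fin d → ℝ} (h : HasSlope A a) (h' : HasSlope A' a') :
    HasSlope (fun t => A t ⊓ A' t) (a ⊓ a') := fun i => by
  refine ((h i).min (h' i)).congr' ?_
  filter_upwards [eventually_ge_atTop 0] with t ht
  simp [min_div_div_right ht]

lemma HasSlope.tendsto_card_Icc {A B : ℝ → Zd d} {a b : Fin d → ℝ} (hA : HasSlope A a)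
    (hB : HasSlope B b) (hab : ∀ i, a i < b i) :
    Tendsto (fun t => ((Finset.Icc (A t) (B t)).card : ℝ) / t ^ d) atTop
      (𝓝 (∏ i, (b i - a i))) := by
  have hside : ∀ i, Tendsto (fun t : ℝ => ((1 + B t i - A t i : ℤ) : ℝ) / t) atTop
      (𝓝 (b i - a i)) := fun i =>
    ((hB.const_add 1 i).sub (hA i)).congr fun t => by simp [sub_div]
  refine (tendsto_finsetProd _ fun i _ => hside i).congr' ?_
  have hpos : ∀ᶠ t in atTop, ∀ i, 0 < ((1 + B t i - A t i : ℤ) : ℝ) / t :=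
    eventually_all.2 fun i => (hside i).eventually (lt_mem_nhds (sub_pos.2 (hab i)))
  filter_upwards [hpos, eventually_gt_atTop (0 : ℝ)] with t ht ht0
  have hside_pos : ∀ i, 0 ≤ 1 + B t i - A t i := fun i => by
    exact_mod_cast ((div_pos_iff_of_pos_right ht0).1 (ht i)).le
  rw [Pi.card_Icc, Finset.prod_div_distrib, Finset.prod_const, Finset.card_univ, Fintype.card_fin,
    Nat.cast_prod]
  congr 1
  refine Finset.prod_congr rfl fun i _ => ?_
  rw [Int.card_Icc, add_comm (B t i), ← Int.cast_natCast, Int.toNat_of_nonneg (hside_pos i)]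

lemma exists_eventually_Icc_subset_centeredCube (a b : Fin d → ℝ) :
    ∃ C > (0 : ℝ), ∀ ⦃A B : ℝ → Zd d⦄, HasSlope A a → HasSlope B b → ∀ᶠ t in atTop, ∃ N : ℕ,
      Finset.Icc (A t) (B t) ⊆ centeredCube d N ∧ ((centeredCube d N).card : ℝ) ≤ C * t ^ d := by
  obtain ⟨K, hK⟩ := exists_nat_gt (∑ i, (|a i| + |b i|))
  have hKi : ∀ i, |a i| < K ∧ |b i| < K := fun i => by
    have := Finset.single_le_sum (f := fun i => |a i| + |b i|) (fun i _ => by positivity)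
      (Finset.mem_univ i)
    constructor <;> linarith [abs_nonneg (a i), abs_nonneg (b i)]
  refine ⟨(2 * K + 3) ^ d, by positivity, fun A B hA hB => ?_⟩
  have hAK : ∀ᶠ t in atTop, ∀ i, -(K : ℝ) < A t i / t := eventually_all.2 fun i =>
    (hA i).eventually (lt_mem_nhds (neg_lt_of_abs_lt (hKi i).1))
  have hBK : ∀ᶠ t in atTop, ∀ i, B t i / t < (K : ℝ) := eventually_all.2 fun i =>
    (hB i).eventually (gt_mem_nhds (lt_of_abs_lt (hKi i).2))
  filter_upwards [hAK, hBK, eventually_ge_atTop 1] with t hAt hBt ht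
  have ht0 : 0 < t := one_pos.trans_le ht
  have hceil := Nat.le_ceil (K * t)
  refine ⟨⌈K * t⌉₊, Finset.Icc_subset_Icc (fun i => ?_) (fun i => ?_), ?_⟩
  · have := (lt_div_iff₀ ht0).1 (hAt i)
    have : (-⌈K * t⌉₊ : ℝ) ≤ A t i := by linarith
    exact_mod_cast this
  · have : (B t i : ℝ) ≤ ⌈K * t⌉₊ := ((div_lt_iff₀ ht0).1 (hBt i)).le.trans hceil
    exact_mod_cast this
  · rw [card_centeredCube, ← mul_pow]
    push_cast
    have := Nat.ceil_lt_add_one (a := K * t) (by positivity)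
    gcongr
    nlinarith

/-! ### Superadditive set functions and the maximal inequality -/

/-- Nonnegative superadditive functions of finite sets. -/
structure IsSuperadditive {α : Type*} [DecidableEq α] (g : Finset α → ℝ) : Prop where
  nonneg : ∀ S, 0 ≤ g S
  add_le : ∀ S T, Disjoint S T → g S + g T ≤ g (S ∪ T)

namespace IsSuperadditive

variable {α ι : Type*} [DecidableEq α] {g : Finset α → ℝ}

lemma mono (hg : IsSuperadditive g) : Monotone g := fun S T h => by
  have := hg.add_le S (T \ S) Finset.disjoint_sdiff
  rw [Finset.union_sdiff_of_subset h] at this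
  linarith [hg.nonneg (T \ S)]

lemma sum_le (hg : IsSuperadditive g) {u : Finset ι} {f : ι → Finset α}
    (hf : (u : Set ι).PairwiseDisjoint f) : ∑ i ∈ u, g (f i) ≤ g (u.biUnion f) := by
  induction u using Finset.induction_on with
  | empty => simpa using hg.nonneg ∅
  | insert a s ha ih =>
    rw [Finset.coe_insert, Set.pairwiseDisjoint_insert_of_notMem (by simpa)] at hf
    rw [Finset.sum_insert ha, Finset.biUnion_insert]
    have hdisj : Disjoint (f a) (s.biUnion f) := (Finset.disjoint_biUnion_right _ _ _).2 hf.2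
    linarith [ih hf.1, hg.add_le _ _ hdisj]

end IsSuperadditive

lemma isSuperadditive_sum {α : Type*} [DecidableEq α] {f : α → ℝ} (hf : ∀ x, 0 ≤ f x) :
    IsSuperadditive fun S => ∑ x ∈ S, f x where
  nonneg _ := Finset.sum_nonneg fun x _ => hf x
  add_le _ _ h := (Finset.sum_union h).ge

/-- The density of the set function `g` on every centred cube is at most `c`. -/
def DensityLE (g : Finset (Zd d) → ℝ) (c : ℝ) : Prop :=
  ∀ N, g (centeredCube d N) ≤ c * (centeredCube d N).card

lemma DensityLE.mono {g : Finset (Zd d) → ℝ} {c c' : ℝ} (h : DensityLE g c) (hc : c ≤ c') :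
    DensityLE g c' := fun N =>
  (h N).trans (mul_le_mul_of_nonneg_right hc (Nat.cast_nonneg _))

lemma exists_eventually_div_pow_le (a b : Fin d → ℝ) :
    ∃ C > 0, ∀ ⦃g : Finset (Zd d) → ℝ⦄ ⦃c : ℝ⦄ ⦃A B : ℝ → Zd d⦄, IsSuperadditive g →
      DensityLE g c → HasSlope A a → HasSlope B b →
      ∀ᶠ t in atTop, g (Finset.Icc (A t) (B t)) / t ^ d ≤ C * c := by
  obtain ⟨C, hC, hsub⟩ := exists_eventually_Icc_subset_centeredCube a b
  refine ⟨C, hC, fun g c A B hg hgc hA hB => ?_⟩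
  have hc : 0 ≤ c := nonneg_of_mul_nonneg_left ((hg.nonneg _).trans (hgc 0))
    (card_centeredCube_pos 0)
  filter_upwards [hsub hA hB, eventually_gt_atTop 0] with t ⟨N, hN, hcard⟩ ht
  rw [div_le_iff₀ (pow_pos ht d), mul_comm C, mul_assoc]
  exact (hg.mono hN).trans ((hgc N).trans (mul_le_mul_of_nonneg_left hcard hc))

-- Vitali's covering lemma: the fivefold enlargements of the cubes centred in `u` cover `T`.
lemma exists_pairwiseDisjoint_vadd_centeredCube (T : Finset (Zd d)) (r : Zd d → ℕ) :
    ∃ u ⊆ T, (u : Set (Zd d)).PairwiseDisjoint (fun z => z +ᵥ centeredCube d (r z)) ∧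
      T.card ≤ 5 ^ d * ∑ z ∈ u, (centeredCube d (r z)).card := by
  obtain ⟨u, hut, hdisj, hcov⟩ := Vitali.exists_disjoint_subfamily_covering_enlargement_closedBall
    (T : Set (Zd d)) id (fun z => (r z : ℝ)) (T.sup r : ℕ)
    (fun z hz => Nat.cast_le.2 (Finset.le_sup (f := r) hz)) 5 (by norm_num)
  lift u to Finset (Zd d) using T.finite_toSet.subset hut
  refine ⟨u, Finset.coe_subset.1 hut, fun x hx y hy hxy => ?_, ?_⟩
  · rw [Function.onFun, ← Finset.disjoint_coe, coe_vadd_centeredCube, coe_vadd_centeredCube]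
    exact hdisj hx hy hxy
  have hTu : T ⊆ u.biUnion fun z => z +ᵥ centeredCube d (5 * r z) := fun z hz => by
    obtain ⟨b, hb, hsub⟩ := hcov z hz
    refine Finset.mem_biUnion.2 ⟨b, hb, ?_⟩
    rw [← Finset.mem_coe, coe_vadd_centeredCube]
    push_cast
    exact hsub (mem_closedBall_self (by positivity))
  rw [Finset.mul_sum]
  refine ((Finset.card_le_card hTu).trans Finset.card_biUnion_le).trans
    (Finset.sum_le_sum fun z _ => ?_)
  rw [Finset.card_vadd_finset, card_centeredCube, card_centeredCube, ← mul_pow]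
  exact Nat.pow_le_pow_left (by omega) d

lemma IsSuperadditive.mul_card_le {g : Finset (Zd d) → ℝ} (hg : IsSuperadditive g)
    {c : ℝ} (hc : 0 ≤ c) {N K : ℕ} {T : Finset (Zd d)} (hT : T ⊆ centeredCube d N)
    (hgT : ∀ z ∈ T, ∃ r ≤ K, c * (centeredCube d r).card ≤ g (z +ᵥ centeredCube d r)) :
    c * T.card ≤ 5 ^ d * g (centeredCube d (N + K)) := by
  choose! r hrK hgr using hgT
  obtain ⟨u, hut, hdisj, hcard⟩ := exists_pairwiseDisjoint_vadd_centeredCube T r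
  have hsub : (u.biUnion fun z => z +ᵥ centeredCube d (r z)) ⊆ centeredCube d (N + K) := by
    refine Finset.biUnion_subset.2 fun z hz => ?_
    have hzN : z ∈ (centeredCube d N : Set (Zd d)) := hT (hut hz)
    rw [coe_centeredCube, mem_closedBall] at hzN
    rw [← Finset.coe_subset, coe_vadd_centeredCube, coe_centeredCube]
    refine closedBall_subset_closedBall' ?_
    have : (r z : ℝ) ≤ K := Nat.cast_le.2 (hrK z (hut hz))
    push_cast
    linarith
  calc c * T.card ≤ c * (5 ^ d * ∑ z ∈ u, (centeredCube d (r z)).card : ℕ) := by gcongr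
    _ = 5 ^ d * ∑ z ∈ u, c * ((centeredCube d (r z)).card : ℝ) := by
        push_cast
        rw [mul_left_comm, Finset.mul_sum]
    _ ≤ 5 ^ d * ∑ z ∈ u, g (z +ᵥ centeredCube d (r z)) := by
        gcongr with z hz
        exact hgr z (hut hz)
    _ ≤ 5 ^ d * g (centeredCube d (N + K)) := by
        gcongr
        exact (hg.sum_le hdisj).trans (hg.mono hsub)

section Superadditive

variable [AddAction (Zd d) Ω]

/-- A stationary superadditive process over the `ℤᵈ`-action: a random nonnegative superadditive
function of finite subsets of the lattice that is equivariant under translations. -/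
structure IsSuperadditiveProcess (P : Measure Ω) (G : Ω → Finset (Zd d) → ℝ) : Prop where
  isSuperadditive : ∀ ω, IsSuperadditive (G ω)
  vadd_apply : ∀ (w : Zd d) ω S, G (w +ᵥ ω) S = G ω (w +ᵥ S)
  integrable : ∀ S, Integrable (G · S) P

variable {P : Measure Ω} [MeasurableConstVAdd (Zd d) Ω] [VAddInvariantMeasure (Zd d) Ω P]

lemma integrable_comp_vadd {f : Ω → ℝ} (hf : Integrable f P) (z : Zd d) :
    Integrable (fun ω => f (z +ᵥ ω)) P :=
  (measurePreserving_vadd z P).integrable_comp_of_integrable hf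

lemma integral_sum_vadd {f : Ω → ℝ} (hf : Integrable f P) (S : Finset (Zd d)) :
    ∫ ω, ∑ z ∈ S, f (z +ᵥ ω) ∂P = (∫ ω, f ω ∂P) * S.card := by
  rw [integral_finsetSum _ fun z _ => integrable_comp_vadd hf z]
  simp only [integral_vadd_eq_self, Finset.sum_const, nsmul_eq_mul, mul_comm]

lemma isSuperadditiveProcess_sum {f : Ω → ℝ} (hf : Integrable f P) (hf0 : ∀ ω, 0 ≤ f ω) :
    IsSuperadditiveProcess P fun ω (S : Finset (Zd d)) => ∑ z ∈ S, f (z +ᵥ ω) where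
  isSuperadditive ω := isSuperadditive_sum fun _ => hf0 _
  vadd_apply w ω S := by simp only [sum_vadd_finset, ← add_vadd, add_comm]
  integrable S := integrable_finsetSum _ fun z _ => integrable_comp_vadd hf z

namespace IsSuperadditiveProcess

variable [IsProbabilityMeasure P] {G : Ω → Finset (Zd d) → ℝ} {c δ : ℝ}

lemma mul_measureReal_le (hG : IsSuperadditiveProcess P G) (hc : 0 ≤ c) (N K : ℕ) :
    c * (centeredCube d N).card *
        P.real {ω | ∃ k ≤ K, c * (centeredCube d k).card ≤ G ω (centeredCube d k)}
      ≤ 5 ^ d * ∫ ω, G ω (centeredCube d (N + K)) ∂P := by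
  set B := {ω | ∃ k ≤ K, c * (centeredCube d k).card ≤ G ω (centeredCube d k)} with hB_def
  have hB : NullMeasurableSet B P := by
    simp_rw [hB_def, Set.ofPred_exists, ← exists_prop, Set.ofPred_exists]
    exact .iUnion fun k => .iUnion fun _ =>
      nullMeasurableSet_le aemeasurable_const (hG.integrable _).aemeasurable
  have hB_int : Integrable (B.indicator fun _ => (1 : ℝ)) P := (integrable_const 1).indicator₀ hB
  have hpointwise : ∀ ω, c * ∑ z ∈ centeredCube d N, B.indicator (fun _ => (1 : ℝ)) (z +ᵥ ω)
      ≤ 5 ^ d * G ω (centeredCube d (N + K)) := fun ω => by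
    have hcount := (hG.isSuperadditive ω).mul_card_le hc (K := K)
      (Finset.filter_subset (fun z => z +ᵥ ω ∈ B) (centeredCube d N)) fun z hz => by
        simp only [← hG.vadd_apply]
        exact (Finset.mem_filter.1 hz).2
    rw [← Finset.sum_boole] at hcount
    simpa only [Set.indicator_apply] using hcount
  calc c * (centeredCube d N).card * P.real B
      = ∫ ω, c * ∑ z ∈ centeredCube d N, B.indicator (fun _ => (1 : ℝ)) (z +ᵥ ω) ∂P := by
        rw [integral_const_mul, integral_sum_vadd hB_int, integral_indicator₀ hB,
          setIntegral_const, smul_eq_mul, mul_one]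
        ring
    _ ≤ ∫ ω, 5 ^ d * G ω (centeredCube d (N + K)) ∂P :=
        integral_mono
          ((integrable_finsetSum _ fun z _ => integrable_comp_vadd hB_int z).const_mul c)
          ((hG.integrable _).const_mul _) hpointwise
    _ = _ := integral_const_mul _ _

/-- The multiparameter maximal inequality. -/
theorem measureReal_not_densityLE_le (hG : IsSuperadditiveProcess P G) (hc : 0 < c)
    (hδ : ∀ᶠ N in atTop, ∫ ω, G ω (centeredCube d N) ∂P ≤ δ * (centeredCube d N).card) :
    P.real {ω | ¬ DensityLE (G ω) c} ≤ 5 ^ d * δ / c := by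
  set B : ℕ → Set Ω := fun K =>
    {ω | ∃ k ≤ K, c * (centeredCube d k).card ≤ G ω (centeredCube d k)} with hB_def
  have hBK : ∀ K, P.real (B K) ≤ 5 ^ d * δ / c := fun K => by
    have hlim := (tendsto_card_centeredCube_add_div_card d K).const_mul (5 ^ d * δ / c)
    rw [mul_one] at hlim
    refine ge_of_tendsto hlim ?_
    filter_upwards [(tendsto_add_atTop_nat K).eventually hδ] with N hN
    have hcard := card_centeredCube_pos (d := d) N
    rw [div_mul_div_comm, le_div_iff₀ (by positivity), mul_assoc, mul_comm (P.real _)]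
    exact (hG.mul_measureReal_le hc.le N K).trans (mul_le_mul_of_nonneg_left hN (by positivity))
  have hB_mono : Monotone B := fun _ _ hKL _ ⟨k, hk, h⟩ => ⟨k, hk.trans hKL, h⟩
  have hlim : Tendsto (fun K => P.real (B K)) atTop (𝓝 (P.real (⋃ K, B K))) :=
    (ENNReal.tendsto_toReal (measure_ne_top _ _)).comp (tendsto_measure_iUnion_atTop hB_mono)
  refine (measureReal_mono fun ω hω => ?_).trans (le_of_tendsto' hlim hBK)
  obtain ⟨k, hk⟩ := not_forall.1 hω
  exact Set.mem_iUnion.2 ⟨k, k, le_rfl, (not_le.1 hk).le⟩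

end IsSuperadditiveProcess

variable [IsProbabilityMeasure P] {ι : Type*} {c : ℝ}

lemma ae_exists_densityLE {G : ι → Ω → Finset (Zd d) → ℝ} {Q : ι → Ω → Prop} (hc : 0 < c)
    (h : ∀ δ > 0, ∃ i, IsSuperadditiveProcess P (G i) ∧ (∀ᵐ ω ∂P, Q i ω) ∧
      ∀ᶠ N in atTop, ∫ ω, G i ω (centeredCube d N) ∂P ≤ δ * (centeredCube d N).card) :
    ∀ᵐ ω ∂P, ∃ i, Q i ω ∧ DensityLE (G i ω) c := by
  rw [ae_iff, ← measureReal_eq_zero_iff]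
  refine le_antisymm (le_of_forall_pos_le_add fun η hη => ?_) measureReal_nonneg
  obtain ⟨i, hG, hQ, hδ⟩ := h (c * η / 5 ^ d) (by positivity)
  have hmax := hG.measureReal_not_densityLE_le hc hδ
  rw [mul_div_cancel₀ _ (by positivity), mul_div_cancel_left₀ _ hc.ne'] at hmax
  rw [zero_add]
  refine le_trans (ENNReal.toReal_mono (measure_ne_top _ _) (measure_mono_ae ?_)) hmax
  filter_upwards [hQ] with ω hω hne hle
  exact hne ⟨i, hω, hle⟩

lemma ae_forall_pos_exists_densityLE {G : ι → Ω → Finset (Zd d) → ℝ} {Q : ι → Ω → Prop}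
    {e : ι → ℝ} (h : ∀ δ > 0, ∃ i, e i ≤ δ ∧ IsSuperadditiveProcess P (G i) ∧ (∀ᵐ ω ∂P, Q i ω) ∧
      ∀ᶠ N in atTop, ∫ ω, G i ω (centeredCube d N) ∂P ≤ δ * (centeredCube d N).card) :
    ∀ᵐ ω ∂P, ∀ ε > 0, ∃ i, e i ≤ ε ∧ Q i ω ∧ DensityLE (G i ω) ε := by
  have hfixed : ∀ ε > 0, ∀ᵐ ω ∂P, ∃ i, (e i ≤ ε ∧ Q i ω) ∧ DensityLE (G i ω) ε :=
    fun ε hε => ae_exists_densityLE hε fun δ hδ => by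
      obtain ⟨i, hi, hG, hQ, hint⟩ := h (min δ ε) (lt_min hδ hε)
      refine ⟨i, hG, hQ.mono fun ω hω => ⟨hi.trans (min_le_right _ _), hω⟩,
        hint.mono fun N hN => ?_⟩
      exact hN.trans (mul_le_mul_of_nonneg_right (min_le_left _ _) (Nat.cast_nonneg _))
  filter_upwards [ae_all_iff.2 fun k : ℕ => hfixed (1 / (k + 1)) Nat.one_div_pos_of_nat]
    with ω hω ε hε
  obtain ⟨k, hk⟩ := exists_nat_one_div_lt hε
  obtain ⟨i, ⟨hi, hQ⟩, hG⟩ := hω k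
  exact ⟨i, hi.trans hk.le, hQ, hG.mono hk.le⟩

end Superadditive

/-! ### The pointwise ergodic theorem -/

/-- The set function `m` has density `c` along every family of expanding lattice boxes: if the
corners of `Icc (A t) (B t)` have slopes `a < b`, then `m (Icc (A t) (B t)) / tᵈ` tends to `c`
times the volume of `∏ᵢ [aᵢ, bᵢ]`. The boxes need neither be nested nor contain the origin. -/
def HasBoxDensity (m : Finset (Zd d) → ℝ) (c : ℝ) : Prop :=
  ∀ ⦃a b : Fin d → ℝ⦄, (∀ i, a i < b i) → ∀ ⦃A B : ℝ → Zd d⦄, HasSlope A a → HasSlope B b →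
    Tendsto (fun t => m (Finset.Icc (A t) (B t)) / t ^ d) atTop (𝓝 (c * ∏ i, (b i - a i)))

lemma hasBoxDensity_const_mul_card (d : ℕ) (c : ℝ) :
    HasBoxDensity (fun S : Finset (Zd d) => c * S.card) c := fun a b hab A B hA hB => by
  simpa only [mul_div_assoc] using (hA.tendsto_card_Icc hB hab).const_mul c

lemma tendsto_of_forall_eventually_abs_sub_le {ι : Type*} {u : Filter ι} {f : ι → ℝ} {l C : ℝ}
    (h : ∀ ε > 0, ∀ᶠ t in u, |f t - l| ≤ C * ε) : Tendsto f u (𝓝 l) := by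
  refine Metric.tendsto_nhds.2 fun ε hε => ?_
  filter_upwards [h (ε / (|C| + 1)) (by positivity)] with t ht
  refine ht.trans_lt ?_
  rw [mul_div_assoc', div_lt_iff₀ (by positivity)]
  nlinarith [le_abs_self C]

namespace HasBoxDensity

variable {m m' : Finset (Zd d) → ℝ} {c c' : ℝ}

lemma add (h : HasBoxDensity m c) (h' : HasBoxDensity m' c') :
    HasBoxDensity (fun S => m S + m' S) (c + c') := fun a b hab A B hA hB => by
  simpa only [add_div, add_mul] using (h hab hA hB).add (h' hab hA hB)

lemma const_mul (h : HasBoxDensity m c) (r : ℝ) : HasBoxDensity (fun S => r * m S) (r * c) :=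
  fun a b hab A B hA hB => by
    simpa only [mul_div_assoc, mul_assoc] using (h hab hA hB).const_mul r

lemma tendsto_sum_sdiff {f : Zd d → ℝ} (h : HasBoxDensity (fun S => ∑ z ∈ S, f z) c)
    {a b : Fin d → ℝ} (hab : ∀ i, a i < b i) {A B A' B' : ℝ → Zd d} (hA : HasSlope A a)
    (hB : HasSlope B b) (hA' : HasSlope A' a) (hB' : HasSlope B' b) :
    Tendsto (fun t => (∑ z ∈ Finset.Icc (A t) (B t) \ Finset.Icc (A' t) (B' t), f z) / t ^ d)
      atTop (𝓝 0) := by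
  have hsup : HasSlope (fun t => A t ⊔ A' t) a := by simpa only [sup_idem] using hA.sup hA'
  have hinf : HasSlope (fun t => B t ⊓ B' t) b := by simpa only [inf_idem] using hB.inf hB'
  have hdiff := (h hab hA hB).sub (h hab hsup hinf)
  rw [sub_self] at hdiff
  refine hdiff.congr fun t => ?_
  rw [← sub_div, ← Icc_inter_Icc, ← Finset.sum_sdiff_eq_sub Finset.inter_subset_left,
    Finset.sdiff_inter_self_left]

end HasBoxDensity

lemma hasBoxDensity_coboundary {s : Zd d → ℝ} {K : ℝ} (hs : ∀ z, |s z| ≤ K) (w : Zd d) :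
    HasBoxDensity (fun S => ∑ z ∈ S, (s (w + z) - s z)) 0 := fun a b hab A B hA hB => by
  have hcard : HasBoxDensity (fun S : Finset (Zd d) => ∑ _z ∈ S, K) K := by
    simpa only [Finset.sum_const, nsmul_eq_mul, mul_comm K] using hasBoxDensity_const_mul_card d K
  have hbound := (hcard.tendsto_sum_sdiff hab (hA.const_add w) (hB.const_add w) hA hB).add
    (hcard.tendsto_sum_sdiff hab hA hB (hA.const_add w) (hB.const_add w))
  rw [zero_mul]
  rw [add_zero] at hbound
  refine squeeze_zero_norm' ?_ hbound
  filter_upwards [eventually_gt_atTop 0] with t ht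
  rw [Finset.sum_sub_distrib, ← sum_vadd_finset, vadd_Icc, ← Finset.sum_sdiff_sub_sum_sdiff,
    norm_div, Real.norm_of_nonneg (pow_pos ht d).le, ← add_div]
  gcongr
  refine (norm_sub_le _ _).trans (add_le_add ?_ ?_) <;>
    exact norm_sum_le_of_le _ fun z _ => hs z

lemma hasBoxDensity_of_forall_approx {m : Finset (Zd d) → ℝ} {c : ℝ}
    (h : ∀ ε > 0, ∃ m' c' g, |c' - c| ≤ ε ∧ HasBoxDensity m' c' ∧ IsSuperadditive g ∧
      (∀ S, |m S - m' S| ≤ g S) ∧ DensityLE g ε) : HasBoxDensity m c := by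
  intro a b hab A B hA hB
  obtain ⟨C, -, hC⟩ := exists_eventually_div_pow_le a b
  set vol := ∏ i, (b i - a i)
  have hvol : 0 ≤ vol := Finset.prod_nonneg fun i _ => (sub_pos.2 (hab i)).le
  refine tendsto_of_forall_eventually_abs_sub_le (C := C + 1 + vol) fun ε hε => ?_
  obtain ⟨m', c', g, hc, hm', hg, hmg, hgε⟩ := h ε hε
  filter_upwards [hC hg hgε hA hB, eventually_gt_atTop 0,
    (hm' hab hA hB).eventually (closedBall_mem_nhds _ hε)] with t hgt ht hm't
  set S := Finset.Icc (A t) (B t)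
  have hclose : |m S / t ^ d - m' S / t ^ d| ≤ C * ε := by
    rw [← sub_div, abs_div, abs_of_pos (pow_pos ht d)]
    exact (div_le_div_of_nonneg_right (hmg S) (pow_pos ht d).le).trans hgt
  have hdens : |c' * vol - c * vol| ≤ ε * vol := by
    rw [← sub_mul, abs_mul, abs_of_nonneg hvol]
    gcongr
  calc |m S / t ^ d - c * vol|
      ≤ |m S / t ^ d - m' S / t ^ d| + |m' S / t ^ d - c' * vol| + |c' * vol - c * vol| :=
        (abs_sub_le _ (c' * vol) _).trans (add_le_add_left (abs_sub_le _ _ _) _)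
    _ ≤ C * ε + ε + ε * vol := add_le_add_three hclose hm't hdens
    _ = (C + 1 + vol) * ε := by ring

lemma ae_eq_const_of_forall_comp_vadd_ae_eq {G X : Type*} [VAdd G Ω] {P : Measure Ω}
    [ErgodicVAdd G Ω P] [Nonempty X] [MeasurableSpace X] [MeasurableSpace.CountablySeparated X]
    {φ : Ω → X} (hφ : NullMeasurable φ P) (hinv : ∀ g : G, (fun ω => φ (g +ᵥ ω)) =ᵐ[P] φ) :
    ∃ c, φ =ᵐ[P] Function.const Ω c :=
  exists_eventuallyEq_const_of_forall_separating MeasurableSet fun U hU => by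
    have hconst : EventuallyConst (φ ⁻¹' U) (ae P) :=
      aeconst_of_forall_preimage_vadd_ae_eq G (hφ hU) fun g =>
        ((hinv g).mono fun ω hω => by simp only [Set.mem_preimage, hω]).set_eq
    exact eventuallyConst_set.1 hconst

section ErgodicMean

variable [AddAction (Zd d) Ω] {P : Measure Ω}

/-- The averages of `f` along the orbit of almost every point, over all families of expanding
boxes, converge to the expectation of `f`. -/
def HasErgodicMean (P : Measure Ω) (f : Ω → ℝ) : Prop :=
  ∀ᵐ ω ∂P, HasBoxDensity (fun S : Finset (Zd d) => ∑ z ∈ S, f (z +ᵥ ω)) (∫ ω, f ω ∂P)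

lemma hasErgodicMean_const [IsProbabilityMeasure P] (c : ℝ) :
    HasErgodicMean (d := d) P fun _ : Ω => c := Eventually.of_forall fun _ => by
  simpa only [Finset.sum_const, nsmul_eq_mul, mul_comm c, integral_const, probReal_univ,
    smul_eq_mul, one_mul] using hasBoxDensity_const_mul_card d c

namespace HasErgodicMean

variable {f g : Ω → ℝ}

lemma add (hf : HasErgodicMean (d := d) P f) (hg : HasErgodicMean (d := d) P g)
    (hfi : Integrable f P) (hgi : Integrable g P) : HasErgodicMean (d := d) P (f + g) := by
  filter_upwards [hf, hg] with ω h h'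
  simp only [Pi.add_apply, Finset.sum_add_distrib, integral_add hfi hgi]
  exact h.add h'

lemma const_smul (hf : HasErgodicMean (d := d) P f) (r : ℝ) :
    HasErgodicMean (d := d) P (r • f) := by
  filter_upwards [hf] with ω h
  simp only [Pi.smul_apply, smul_eq_mul, ← Finset.mul_sum, integral_const_mul]
  exact h.const_mul r

variable [MeasurableConstVAdd (Zd d) Ω] [VAddInvariantMeasure (Zd d) Ω P]

lemma congr_ae (hf : HasErgodicMean (d := d) P f) (hfg : f =ᵐ[P] g) :
    HasErgodicMean (d := d) P g := by
  have horbit : ∀ᵐ ω ∂P, ∀ z : Zd d, f (z +ᵥ ω) = g (z +ᵥ ω) := ae_all_iff.2 fun z =>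
    (measurePreserving_vadd z P).quasiMeasurePreserving.ae hfg
  filter_upwards [hf, horbit] with ω h heq
  rw [← integral_congr_ae hfg]
  simpa only [heq] using h

variable [IsProbabilityMeasure P]

lemma of_forall_approx (hf : Integrable f P)
    (h : ∀ δ > 0, ∃ g, Integrable g P ∧ HasErgodicMean (d := d) P g ∧ ∫ ω, |f ω - g ω| ∂P ≤ δ) :
    HasErgodicMean (d := d) P f := by
  have happrox := ae_forall_pos_exists_densityLE (P := P)
    (G := fun (g : Ω → ℝ) ω (S : Finset (Zd d)) => ∑ z ∈ S, |f (z +ᵥ ω) - g (z +ᵥ ω)|)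
    (Q := fun g ω => HasBoxDensity (fun S : Finset (Zd d) => ∑ z ∈ S, g (z +ᵥ ω)) (∫ ω, g ω ∂P))
    (e := fun g => |∫ ω, g ω ∂P - ∫ ω, f ω ∂P|) fun δ hδ => by
      obtain ⟨g, hgi, hg, hfg⟩ := h δ hδ
      have hi : Integrable (fun ω => |f ω - g ω|) P := (hf.sub hgi).abs
      refine ⟨g, ?_, isSuperadditiveProcess_sum hi fun _ => abs_nonneg _, hg,
        Eventually.of_forall fun N => ?_⟩
      · rw [abs_sub_comm, ← integral_sub hf hgi]
        exact (abs_integral_le_integral_abs).trans hfg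
      · rw [integral_sum_vadd hi]
        gcongr
  filter_upwards [happrox] with ω hω
  refine hasBoxDensity_of_forall_approx fun ε hε => ?_
  obtain ⟨g, hmean, hg, hdens⟩ := hω ε hε
  refine ⟨_, _, _, hmean, hg, isSuperadditive_sum fun _ => abs_nonneg _, fun S => ?_, hdens⟩
  rw [← Finset.sum_sub_distrib]
  exact Finset.abs_sum_le_sum_abs _ _

end HasErgodicMean

variable [MeasurableConstVAdd (Zd d) Ω] [VAddInvariantMeasure (Zd d) Ω P]

lemma hasErgodicMean_coboundary {g : Ω → ℝ} {K : ℝ} (hg : Integrable g P) (hK : ∀ ω, |g ω| ≤ K)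
    (w : Zd d) : HasErgodicMean (d := d) P fun ω => g (w +ᵥ ω) - g ω :=
  Eventually.of_forall fun ω => by
    rw [integral_sub (integrable_comp_vadd hg w) hg, integral_vadd_eq_self, sub_self]
    simpa only [add_vadd] using hasBoxDensity_coboundary (fun z => hK (z +ᵥ ω)) w

lemma comp_vadd_ae_eq_of_setIntegral_preimage_eq {φ : Ω → ℝ} (hφ : Integrable φ P) {w : Zd d}
    (h : ∀ B, MeasurableSet B → ∫ ω in (w +ᵥ ·) ⁻¹' B, φ ω ∂P = ∫ ω in B, φ ω ∂P) :
    (fun ω => φ (w +ᵥ ω)) =ᵐ[P] φ := by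
  refine (integrable_comp_vadd hφ w).ae_eq_of_forall_setIntegral_eq _ _ hφ fun C hC _ => ?_
  obtain ⟨B, hB, rfl⟩ : ∃ B, MeasurableSet B ∧ (w +ᵥ ·) ⁻¹' B = C :=
    ⟨(-w +ᵥ ·) ⁻¹' C, measurable_const_vadd (-w) hC, by ext; simp⟩
  rw [h B hB]
  exact (measurePreserving_vadd w P).setIntegral_preimage_emb (measurableEmbedding_const_vadd w) φ B

variable [IsProbabilityMeasure P]

lemma integral_abs_sub_le_dist {p : ℝ≥0∞} [Fact (1 ≤ p)] (f g : Lp ℝ p P) :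
    ∫ ω, |f ω - g ω| ∂P ≤ dist f g := by
  have hp : 1 ≤ p := Fact.out
  calc ∫ ω, |f ω - g ω| ∂P = ∫ ω, ‖(f - g : Lp ℝ p P) ω‖ ∂P :=
        integral_congr_ae ((Lp.coeFn_sub f g).mono fun ω hω => by
          simp only [hω, Pi.sub_apply, Real.norm_eq_abs])
    _ = (eLpNorm (f - g : Lp ℝ p P) 1 P).toReal := by
        rw [eLpNorm_one_eq_lintegral_enorm,
          integral_norm_eq_lintegral_enorm (Lp.aestronglyMeasurable _)]
    _ ≤ (eLpNorm (f - g : Lp ℝ p P) p P).toReal :=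
        ENNReal.toReal_mono (Lp.memLp _).2.ne
          (eLpNorm_le_eLpNorm_of_exponent_le hp (Lp.aestronglyMeasurable _))
    _ = dist f g := by rw [dist_eq_norm, Lp.norm_def]

lemma isClosed_hasErgodicMean (p : ℝ≥0∞) [Fact (1 ≤ p)] :
    IsClosed {f : Lp ℝ p P | HasErgodicMean (d := d) P f} := by
  refine isClosed_of_closure_subset fun f hf => HasErgodicMean.of_forall_approx
    ((Lp.memLp f).integrable Fact.out) fun δ hδ => ?_
  obtain ⟨g, hg, hfg⟩ := Metric.mem_closure_iff.1 hf δ hδ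
  exact ⟨g, (Lp.memLp g).integrable Fact.out, hg, (integral_abs_sub_le_dist f g).trans hfg.le⟩

/-- The square-integrable functions with an ergodic mean, the subspace in which the mean ergodic
argument takes place. -/
def ergodicMeanSubmodule (d : ℕ) [AddAction (Zd d) Ω] [MeasurableConstVAdd (Zd d) Ω]
    (P : Measure Ω) [VAddInvariantMeasure (Zd d) Ω P] [IsProbabilityMeasure P] :
    Submodule ℝ (Lp ℝ 2 P) where
  carrier := {x | HasErgodicMean (d := d) P x}
  zero_mem' := (hasErgodicMean_const 0).congr_ae (Lp.coeFn_zero ℝ 2 P).symm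
  add_mem' := fun {x y} hx hy =>
    (hx.add hy ((Lp.memLp x).integrable one_le_two) ((Lp.memLp y).integrable one_le_two)).congr_ae
      (Lp.coeFn_add x y).symm
  smul_mem' := fun r x hx => (hx.const_smul r).congr_ae (Lp.coeFn_smul r x).symm

lemma comp_vadd_ae_eq_of_mem_orthogonal {φ : Lp ℝ 2 P} (hφ : φ ∈ (ergodicMeanSubmodule d P)ᗮ)
    (w : Zd d) : (fun ω => φ (w +ᵥ ω)) =ᵐ[P] φ := by
  refine comp_vadd_ae_eq_of_setIntegral_preimage_eq ((Lp.memLp φ).integrable one_le_two)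
    fun B hB => ?_
  have hwB : MeasurableSet ((w +ᵥ ·) ⁻¹' B) := measurable_const_vadd w hB
  set x := indicatorConstLp 2 hwB (measure_ne_top P _) (1 : ℝ) -
    indicatorConstLp 2 hB (measure_ne_top P _) (1 : ℝ)
  have hx : x ∈ ergodicMeanSubmodule d P := by
    have hcob := hasErgodicMean_coboundary (P := P) (K := 1)
      ((integrable_const (1 : ℝ)).indicator hB) (fun ω => by by_cases h : ω ∈ B <;> simp [h]) w
    exact hcob.congr_ae ((Lp.coeFn_sub _ _).trans
      (indicatorConstLp_coeFn.sub indicatorConstLp_coeFn)).symm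
  have horth := (Submodule.mem_orthogonal _ _).1 hφ x hx
  rw [inner_sub_left, L2.inner_indicatorConstLp_one, L2.inner_indicatorConstLp_one] at horth
  exact sub_eq_zero.1 horth

end ErgodicMean

section ErgodicTheorem

variable [AddAction (Zd d) Ω] [MeasurableConstVAdd (Zd d) Ω] {P : Measure Ω}
  [ErgodicVAdd (Zd d) Ω P] [IsProbabilityMeasure P]

-- A function orthogonal to the coboundaries of indicators is invariant, hence constant.
lemma ergodicMeanSubmodule_orthogonal : (ergodicMeanSubmodule d P)ᗮ = ⊥ := by
  refine (Submodule.eq_bot_iff _).2 fun φ hφ => ?_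
  obtain ⟨c, hc⟩ := ae_eq_const_of_forall_comp_vadd_ae_eq
    (Lp.aestronglyMeasurable φ).aemeasurable.nullMeasurable (comp_vadd_ae_eq_of_mem_orthogonal hφ)
  have hφ_mean : φ ∈ ergodicMeanSubmodule d P := (hasErgodicMean_const c).congr_ae hc.symm
  exact inner_self_eq_zero.1 ((Submodule.mem_orthogonal _ _).1 hφ φ hφ_mean)

lemma ergodicMeanSubmodule_eq_top : ergodicMeanSubmodule d P = ⊤ := by
  have hclosed : IsClosed (ergodicMeanSubmodule d P : Set (Lp ℝ 2 P)) := isClosed_hasErgodicMean 2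
  rw [← hclosed.submodule_topologicalClosure_eq, Submodule.topologicalClosure_eq_top_iff,
    ergodicMeanSubmodule_orthogonal]

theorem hasErgodicMean_of_integrable {f : Ω → ℝ} (hf : Integrable f P) :
    HasErgodicMean (d := d) P f := by
  refine hf.induction (HasErgodicMean (d := d) P) (fun c s hs _ => ?_)
    (fun f g _ hf hg hf' hg' => hf'.add hg' hf hg) (isClosed_hasErgodicMean 1)
    (fun f g hfg _ h => h.congr_ae hfg)
  have hs_mean :
      (indicatorConstLp 2 hs (measure_ne_top P s) c : Lp ℝ 2 P) ∈ ergodicMeanSubmodule d P :=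
    ergodicMeanSubmodule_eq_top (d := d) (P := P) ▸ Submodule.mem_top
  exact HasErgodicMean.congr_ae hs_mean indicatorConstLp_coeFn

end ErgodicTheorem

/-! ### Subadditive set functions and tilings by blocks -/

/-- Nonnegative subadditive functions of finite sets. -/
structure IsSubadditive {α : Type*} [DecidableEq α] (m : Finset α → ℝ) : Prop where
  nonneg : ∀ S, 0 ≤ m S
  empty : m ∅ = 0
  union_le : ∀ S T, Disjoint S T → m (S ∪ T) ≤ m S + m T

namespace IsSubadditive

variable {α ι : Type*} [DecidableEq α] {m : Finset α → ℝ}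

lemma biUnion_le (hm : IsSubadditive m) {u : Finset ι} {f : ι → Finset α}
    (hf : (u : Set ι).PairwiseDisjoint f) : m (u.biUnion f) ≤ ∑ i ∈ u, m (f i) := by
  induction u using Finset.induction_on with
  | empty => simp [hm.empty]
  | insert a s ha ih =>
    rw [Finset.coe_insert, Set.pairwiseDisjoint_insert_of_notMem (by simpa)] at hf
    rw [Finset.sum_insert ha, Finset.biUnion_insert]
    have hdisj : Disjoint (f a) (s.biUnion f) := (Finset.disjoint_biUnion_right _ _ _).2 hf.2
    linarith [ih hf.1, hm.union_le _ _ hdisj]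

lemma le_add_sum_sdiff (hm : IsSubadditive m) {S T : Finset α} (h : S ⊆ T) :
    m T ≤ m S + ∑ z ∈ T \ S, m {z} := by
  have hsum : m (T \ S) ≤ ∑ z ∈ T \ S, m {z} := by
    simpa only [Finset.biUnion_singleton_eq_self] using
      hm.biUnion_le (f := singleton) fun _ _ _ _ => Finset.disjoint_singleton.2
  have hunion := hm.union_le S (T \ S) Finset.disjoint_sdiff
  rw [Finset.union_sdiff_of_subset h] at hunion
  linarith

lemma isSuperadditive_defect (hm : IsSubadditive m) {f : ι → Finset α} {p : ι → Prop}
    [DecidableEq ι] [DecidablePred p] (hf : {i | p i}.PairwiseDisjoint f) :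
    IsSuperadditive fun A : Finset ι =>
      ∑ i ∈ A.filter p, m (f i) - m ((A.filter p).biUnion f) where
  nonneg A := sub_nonneg.2 <| hm.biUnion_le <| hf.subset fun _ hi => (Finset.mem_filter.1 hi).2
  add_le A B hAB := by
    have hdisj : Disjoint ((A.filter p).biUnion f) ((B.filter p).biUnion f) := by
      refine (Finset.disjoint_biUnion_left _ _ _).2 fun i hi =>
        (Finset.disjoint_biUnion_right _ _ _).2 fun j hj => ?_
      rw [Finset.mem_filter] at hi hj
      exact hf hi.2 hj.2 fun hij => Finset.disjoint_left.1 hAB hi.1 (hij ▸ hj.1)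
    have hunion := hm.union_le _ _ hdisj
    rw [Finset.filter_union, Finset.sum_union (Finset.disjoint_filter_filter hAB),
      Finset.union_biUnion]
    linarith

end IsSubadditive

/-- The lattice cube `{0, …, k - 1}ᵈ`. -/
def block (d k : ℕ) : Finset (Zd d) := Finset.Icc 0 fun _ => (k : ℤ) - 1

/-- The residue class of a lattice point modulo `k`. The translates of `block d k` by the points of
one residue class tile the lattice. -/
def residue (k : ℕ) (z : Zd d) : Fin d → ZMod k := fun i => z i

/-- The union of the translates of `block d k` by the points of `A` in the residue class `y`. -/
def tileUnion (k : ℕ) (A : Finset (Zd d)) (y : Fin d → ZMod k) : Finset (Zd d) :=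
  (A.filter (residue k · = y)).biUnion (· +ᵥ block d k)

lemma mem_block {k : ℕ} {v : Zd d} : v ∈ block d k ↔ ∀ i, 0 ≤ v i ∧ v i < k := by
  simp only [block, Finset.mem_Icc, Pi.le_def, Pi.zero_apply, Int.le_sub_one_iff, forall_and]

lemma pairwiseDisjoint_vadd_block (k : ℕ) (y : Fin d → ZMod k) :
    {z : Zd d | residue k z = y}.PairwiseDisjoint (· +ᵥ block d k) := by
  intro z hz z' hz' hne
  refine Finset.disjoint_left.2 fun x hx hx' => hne (funext fun i => ?_)
  obtain ⟨v, hv, rfl⟩ := Finset.mem_vadd_finset.1 hx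
  obtain ⟨v', hv', hvv'⟩ := Finset.mem_vadd_finset.1 hx'
  have hsum : z' i + v' i = z i + v i := congrFun hvv' i
  have hdvd : (k : ℤ) ∣ z' i - z i :=
    (ZMod.intCast_eq_intCast_iff_dvd_sub _ _ _).1 (congrFun (hz.trans hz'.symm) i)
  have hlt : |z' i - z i| < k := by
    have hvi := mem_block.1 hv i
    have hvi' := mem_block.1 hv' i
    rw [abs_lt]
    constructor <;> linarith
  have := Int.eq_zero_of_abs_lt_dvd hdvd hlt
  linarith

lemma tileUnion_subset {k : ℕ} {A T : Finset (Zd d)} (h : A + block d k ⊆ T)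
    (y : Fin d → ZMod k) : tileUnion k A y ⊆ T :=
  Finset.biUnion_subset.2 fun _ hz =>
    (Finset.vadd_finset_subset_add (Finset.mem_filter.1 hz).1).trans h

lemma subset_tileUnion {k : ℕ} [NeZero k] {S A : Finset (Zd d)} (h : S - block d k ⊆ A)
    (y : Fin d → ZMod k) : S ⊆ tileUnion k A y := fun w hw => by
  let v : Zd d := fun i => ((w i : ZMod k) - y i).val
  have hv : v ∈ block d k := mem_block.2 fun i =>
    ⟨Int.natCast_nonneg _, Int.ofNat_lt.2 (ZMod.val_lt _)⟩
  refine Finset.mem_biUnion.2 ⟨w - v, Finset.mem_filter.2 ⟨h (Finset.sub_mem_sub hw hv), ?_⟩,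
    Finset.mem_vadd_finset.2 ⟨v, hv, sub_add_cancel w v⟩⟩
  ext i
  simp [residue, v]

lemma filter_residue_vadd (k : ℕ) (w : Zd d) (A : Finset (Zd d)) (y : Fin d → ZMod k) :
    (w +ᵥ A).filter (residue k · = residue k w + y) = w +ᵥ A.filter (residue k · = y) := by
  have hres : ∀ z, residue k (w + z) = residue k w + y ↔ residue k z = y := fun z => by
    rw [← add_right_inj (residue k w) (b := residue k z)]
    simp [residue, funext_iff]
  ext x
  simp only [Finset.mem_filter, Finset.mem_vadd_finset]
  constructor
  · rintro ⟨⟨z, hz, rfl⟩, hx⟩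
    exact ⟨z, ⟨hz, (hres z).1 hx⟩, rfl⟩
  · rintro ⟨z, ⟨hz, hzy⟩, rfl⟩
    exact ⟨⟨z, hz, rfl⟩, (hres z).2 hzy⟩

lemma tileUnion_vadd (k : ℕ) (w : Zd d) (A : Finset (Zd d)) (y : Fin d → ZMod k) :
    tileUnion k (w +ᵥ A) (residue k w + y) = w +ᵥ tileUnion k A y := by
  rw [tileUnion, filter_residue_vadd, Finset.vadd_finset_def, Finset.image_biUnion, tileUnion,
    Finset.vadd_finset_def, Finset.biUnion_image]
  simp only [vadd_eq_add, add_vadd, Finset.vadd_finset_def]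

/-- The average of `m` over the translates of `block d k` by the points of `A`, counted with
multiplicity `kᵈ`, the number of translates covering each point. -/
def blockMean (m : Finset (Zd d) → ℝ) (k : ℕ) (A : Finset (Zd d)) : ℝ :=
  ((k : ℝ) ^ d)⁻¹ * ∑ z ∈ A, m (z +ᵥ block d k)

/-- The defect of subadditivity of `m` along the `kᵈ` tilings by translates of `block d k`,
averaged over the tilings. -/
def blockDefect (m : Finset (Zd d) → ℝ) (k : ℕ) [NeZero k] (A : Finset (Zd d)) : ℝ :=
  ((k : ℝ) ^ d)⁻¹ * ∑ y : Fin d → ZMod k,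
    (∑ z ∈ A.filter (residue k · = y), m (z +ᵥ block d k) - m (tileUnion k A y))

lemma blockDefect_eq (m : Finset (Zd d) → ℝ) (k : ℕ) [NeZero k] (A : Finset (Zd d)) :
    blockDefect m k A = blockMean m k A - ((k : ℝ) ^ d)⁻¹ * ∑ y, m (tileUnion k A y) := by
  rw [blockDefect, blockMean, Finset.sum_sub_distrib, Finset.sum_fiberwise, mul_sub]

lemma inv_mul_sum_residue_const (d k : ℕ) [NeZero k] (c : ℝ) :
    ((k : ℝ) ^ d)⁻¹ * ∑ _y : Fin d → ZMod k, c = c := by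
  have hk : (k : ℝ) ≠ 0 := NeZero.ne _
  rw [Finset.sum_const, Finset.card_univ, Fintype.card_pi_const, ZMod.card, nsmul_eq_mul]
  push_cast
  field_simp

lemma Icc_add_block_subset (k : ℕ) (a b : Zd d) :
    Finset.Icc a b + block d k ⊆ Finset.Icc (a - k) (b + k) := by
  rintro _ h
  obtain ⟨z, hz, v, hv, rfl⟩ := Finset.mem_add.1 h
  rw [Finset.mem_Icc] at hz ⊢
  rw [mem_block] at hv
  constructor <;> intro i <;> have := hv i <;> have := hz.1 i <;> have := hz.2 i <;>
    simp only [Pi.add_apply, Pi.sub_apply, Pi.natCast_apply] <;> linarith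

lemma Icc_sub_block_subset (k : ℕ) (a b : Zd d) :
    Finset.Icc a b - block d k ⊆ Finset.Icc (a - k) (b + k) := by
  rintro _ h
  obtain ⟨z, hz, v, hv, rfl⟩ := Finset.mem_sub.1 h
  rw [Finset.mem_Icc] at hz ⊢
  rw [mem_block] at hv
  constructor <;> intro i <;> have := hv i <;> have := hz.1 i <;> have := hz.2 i <;>
    simp only [Pi.add_apply, Pi.sub_apply, Pi.natCast_apply] <;> linarith

namespace IsSubadditive

variable {m : Finset (Zd d) → ℝ} {k : ℕ} [NeZero k]

lemma isSuperadditive_blockDefect (hm : IsSubadditive m) : IsSuperadditive (blockDefect m k) where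
  nonneg A := mul_nonneg (by positivity) <| Finset.sum_nonneg fun y _ =>
    (hm.isSuperadditive_defect (pairwiseDisjoint_vadd_block k y)).nonneg A
  add_le A B hAB := by
    rw [blockDefect, blockDefect, blockDefect, ← mul_add, ← Finset.sum_add_distrib]
    gcongr with y
    exact (hm.isSuperadditive_defect (pairwiseDisjoint_vadd_block k y)).add_le A B hAB

variable {S A T : Finset (Zd d)}

lemma blockDefect_add_le (hm : IsSubadditive m) (hSA : S - block d k ⊆ A)
    (hAT : A + block d k ⊆ T) :
    blockDefect m k A + m T ≤ blockMean m k A + ∑ z ∈ T \ S, m {z} := by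
  have htile : ∀ y, m T - ∑ z ∈ T \ S, m {z} ≤ m (tileUnion k A y) := fun y => by
    have hle := hm.le_add_sum_sdiff (tileUnion_subset hAT y)
    have hsum : ∑ z ∈ T \ tileUnion k A y, m {z} ≤ ∑ z ∈ T \ S, m {z} :=
      Finset.sum_le_sum_of_subset_of_nonneg
        (Finset.sdiff_subset_sdiff subset_rfl (subset_tileUnion hSA y)) fun _ _ _ => hm.nonneg _
    linarith
  have havg : ((k : ℝ) ^ d)⁻¹ * ∑ _y : Fin d → ZMod k, (m T - ∑ z ∈ T \ S, m {z}) ≤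
      ((k : ℝ) ^ d)⁻¹ * ∑ y, m (tileUnion k A y) := by
    gcongr
    exact htile _
  rw [inv_mul_sum_residue_const] at havg
  rw [blockDefect_eq]
  linarith

lemma blockMean_le (hm : IsSubadditive m) (hSA : S - block d k ⊆ A) (hAT : A + block d k ⊆ T) :
    blockMean m k A ≤ blockDefect m k A + m S + ∑ z ∈ T \ S, m {z} := by
  have htile : ∀ y, m (tileUnion k A y) ≤ m S + ∑ z ∈ T \ S, m {z} := fun y => by
    have hle := hm.le_add_sum_sdiff (subset_tileUnion hSA y)
    have hsum : ∑ z ∈ tileUnion k A y \ S, m {z} ≤ ∑ z ∈ T \ S, m {z} :=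
      Finset.sum_le_sum_of_subset_of_nonneg
        (Finset.sdiff_subset_sdiff (tileUnion_subset hAT y) subset_rfl) fun _ _ _ => hm.nonneg _
    linarith
  have havg : ((k : ℝ) ^ d)⁻¹ * ∑ y, m (tileUnion k A y) ≤
      ((k : ℝ) ^ d)⁻¹ * ∑ _y : Fin d → ZMod k, (m S + ∑ z ∈ T \ S, m {z}) := by
    gcongr
    exact htile _
  rw [inv_mul_sum_residue_const] at havg
  rw [blockDefect_eq]
  linarith

lemma le_blockMean_Icc_add (hm : IsSubadditive m) (k : ℕ) [NeZero k] (a b : Zd d) :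
    m (Finset.Icc a b) ≤ blockMean m k (Finset.Icc (a + k) (b - k)) +
      ∑ z ∈ Finset.Icc a b \
        (Finset.Icc (a + k + k) (b - k - k) : Finset (Zd d)), m {z} := by
  have hSA := Icc_sub_block_subset k (a + k + k : Zd d) (b - k - k : Zd d)
  have hAT := Icc_add_block_subset k (a + k : Zd d) (b - k : Zd d)
  rw [add_sub_cancel_right, sub_add_cancel] at hSA hAT
  linarith [hm.blockDefect_add_le hSA hAT,
    (hm.isSuperadditive_blockDefect (k := k)).nonneg (Finset.Icc (a + k) (b - k))]

lemma blockMean_Icc_le (hm : IsSubadditive m) (k : ℕ) [NeZero k] (a b : Zd d) :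
    blockMean m k (Finset.Icc (a - k) (b + k)) ≤
      blockDefect m k (Finset.Icc (a - k) (b + k)) + m (Finset.Icc a b) +
        ∑ z ∈ (Finset.Icc (a - k - k) (b + k + k) : Finset (Zd d)) \ Finset.Icc a b, m {z} :=
  hm.blockMean_le (Icc_sub_block_subset k a b) (Icc_add_block_subset k _ _)

theorem hasBoxDensity (hm : IsSubadditive m) {s c : ℝ}
    (hs : HasBoxDensity (fun S => ∑ z ∈ S, m {z}) s)
    (h : ∀ ε > 0, ∃ (k : ℕ+) (c' : ℝ), |c' - c| ≤ ε ∧ HasBoxDensity (blockMean m k) c' ∧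
      DensityLE (blockDefect m k) ε) : HasBoxDensity m c := fun a b hab A B hA hB => by
  obtain ⟨C, hC₀, hC⟩ := exists_eventually_div_pow_le a b
  set v := ∏ i, (b i - a i)
  have hv : 0 ≤ v := Finset.prod_nonneg fun i _ => (sub_pos.2 (hab i)).le
  refine tendsto_of_forall_eventually_abs_sub_le (C := C + 2 + v) fun ε hε => ?_
  obtain ⟨k, c', hcc', hmean, hdefect⟩ := h ε hε
  have hA₁ := hA.add_const ((k : ℕ) : Zd d)
  have hB₁ := hB.sub_const ((k : ℕ) : Zd d)
  have hA₂ := hA.sub_const ((k : ℕ) : Zd d)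
  have hB₂ := hB.add_const ((k : ℕ) : Zd d)
  have hupper := (hmean hab hA₁ hB₁).add
    (hs.tendsto_sum_sdiff hab hA hB (hA₁.add_const (k : ℕ)) (hB₁.sub_const (k : ℕ)))
  have hlower := (hmean hab hA₂ hB₂).sub
    (hs.tendsto_sum_sdiff hab (hA₂.sub_const (k : ℕ)) (hB₂.add_const (k : ℕ)) hA hB)
  rw [add_zero] at hupper
  rw [sub_zero] at hlower
  filter_upwards [hupper.eventually_lt_const (lt_add_of_pos_right _ hε),
    hlower.eventually_const_lt (sub_lt_self _ hε),
    hC hm.isSuperadditive_blockDefect hdefect hA₂ hB₂, eventually_gt_atTop 0]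
    with t hup hlow hdef ht
  have htd : 0 < t ^ d := pow_pos ht d
  have hle := div_le_div_of_nonneg_right (hm.le_blockMean_Icc_add k (A t) (B t)) htd.le
  have hge := div_le_div_of_nonneg_right (hm.blockMean_Icc_le k (A t) (B t)) htd.le
  rw [add_div] at hle
  rw [add_div, add_div] at hge
  have hcv : |c' * v - c * v| ≤ ε * v := by
    rw [← sub_mul, abs_mul, abs_of_nonneg hv]
    exact mul_le_mul_of_nonneg_right hcc' hv
  have hCε : 0 ≤ C * ε := by positivity
  rw [abs_le] at hcv ⊢
  constructor <;> linarith

end IsSubadditive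

/-! ### The subadditive ergodic theorem -/

section Subadditive

variable [AddAction (Zd d) Ω]

/-- A stationary subadditive process over the `ℤᵈ`-action: a random nonnegative subadditive
function of finite subsets of the lattice that is equivariant under translations. -/
structure IsSubadditiveProcess (P : Measure Ω) (M : Ω → Finset (Zd d) → ℝ) : Prop where
  isSubadditive : ∀ ω, IsSubadditive (M ω)
  vadd_apply : ∀ (w : Zd d) ω S, M (w +ᵥ ω) S = M ω (w +ᵥ S)
  integrable : ∀ S, Integrable (M · S) P

/-- The time constant `inf_{k ≥ 1} k⁻ᵈ E[M({0, …, k - 1}ᵈ)]` of a subadditive process. -/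
def timeConstant (P : Measure Ω) (M : Ω → Finset (Zd d) → ℝ) : ℝ :=
  ⨅ k : ℕ+, ((k : ℝ) ^ d)⁻¹ * ∫ ω, M ω (block d k) ∂P

namespace IsSubadditiveProcess

variable {P : Measure Ω} {M : Ω → Finset (Zd d) → ℝ}

lemma inv_mul_integral_nonneg (hM : IsSubadditiveProcess P M) (k : ℕ) (S : Finset (Zd d)) :
    0 ≤ ((k : ℝ) ^ d)⁻¹ * ∫ ω, M ω S ∂P :=
  mul_nonneg (by positivity) (integral_nonneg fun ω => (hM.isSubadditive ω).nonneg S)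

lemma timeConstant_nonneg (hM : IsSubadditiveProcess P M) : 0 ≤ timeConstant P M :=
  Real.iInf_nonneg fun k => hM.inv_mul_integral_nonneg k _

lemma timeConstant_le (hM : IsSubadditiveProcess P M) (k : ℕ+) :
    timeConstant P M ≤ ((k : ℝ) ^ d)⁻¹ * ∫ ω, M ω (block d k) ∂P :=
  ciInf_le ⟨0, Set.forall_mem_range.2 fun k : ℕ+ =>
    hM.inv_mul_integral_nonneg k (block d k)⟩ k

lemma blockMean_eq (hM : IsSubadditiveProcess P M) (k : ℕ) (ω : Ω) (S : Finset (Zd d)) :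
    blockMean (M ω) k S = ∑ z ∈ S, ((k : ℝ) ^ d)⁻¹ * M (z +ᵥ ω) (block d k) := by
  simp only [blockMean, Finset.mul_sum, hM.vadd_apply]

lemma apply_singleton (hM : IsSubadditiveProcess P M) (ω : Ω) (z : Zd d) :
    M ω {z} = M (z +ᵥ ω) {0} := by
  rw [hM.vadd_apply, Finset.vadd_finset_singleton, vadd_eq_add, add_zero]

lemma blockDefect_vadd (hM : IsSubadditiveProcess P M) (k : ℕ) [NeZero k] (w : Zd d) (ω : Ω)
    (S : Finset (Zd d)) : blockDefect (M (w +ᵥ ω)) k S = blockDefect (M ω) k (w +ᵥ S) := by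
  refine congrArg _ (Fintype.sum_equiv (Equiv.addLeft (residue k w)) _ _ fun y => ?_)
  rw [Equiv.coe_addLeft, filter_residue_vadd, tileUnion_vadd, sum_vadd_finset]
  simp only [hM.vadd_apply, vadd_vadd]

lemma isSuperadditiveProcess_blockDefect (hM : IsSubadditiveProcess P M) (k : ℕ) [NeZero k] :
    IsSuperadditiveProcess P fun ω => blockDefect (M ω) k where
  isSuperadditive ω := (hM.isSubadditive ω).isSuperadditive_blockDefect
  vadd_apply w ω S := hM.blockDefect_vadd k w ω S
  integrable _ := (integrable_finsetSum _ fun _ _ =>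
    (integrable_finsetSum _ fun _ _ => hM.integrable _).sub (hM.integrable _)).const_mul _

variable [MeasurableConstVAdd (Zd d) Ω]

section Invariant

variable [VAddInvariantMeasure (Zd d) Ω P]

lemma timeConstant_mul_card_le (hM : IsSubadditiveProcess P M) (N : ℕ) :
    timeConstant P M * (centeredCube d N).card ≤ ∫ ω, M ω (centeredCube d N) ∂P := by
  have hcube : centeredCube d N = (-N : Zd d) +ᵥ block d (2 * N + 1) := by
    rw [block, vadd_Icc, centeredCube]
    congr 1 <;> ext i <;> simp
    ring
  have hle := hM.timeConstant_le (2 * N).succPNat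
  simp only [Nat.succPNat_coe, Nat.succ_eq_add_one] at hle
  rw [inv_mul_eq_div, le_div_iff₀ (by positivity)] at hle
  have hint : ∫ ω, M ω (centeredCube d N) ∂P = ∫ ω, M ω (block d (2 * N + 1)) ∂P := by
    simp only [hcube, ← hM.vadd_apply]
    exact integral_vadd_eq_self (fun ω => M ω (block d (2 * N + 1)))
  rw [card_centeredCube, hint]
  exact_mod_cast hle

lemma integral_blockDefect_le (hM : IsSubadditiveProcess P M) (k : ℕ) [NeZero k] (N : ℕ) :
    ∫ ω, blockDefect (M ω) k (centeredCube d (N + k)) ∂P ≤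
      (((k : ℝ) ^ d)⁻¹ * ∫ ω, M ω (block d k) ∂P - timeConstant P M) *
          (centeredCube d (N + k)).card +
        (∫ ω, M ω {0} ∂P) * ((centeredCube d (N + k + k)).card - (centeredCube d N).card) := by
  set S := centeredCube d N
  set A := centeredCube d (N + k) with hA
  set T := centeredCube d (N + k + k) with hT
  have hAT : A ⊆ T := centeredCube_mono (Nat.le_add_right _ _)
  have hST : S ⊆ T := (centeredCube_mono (Nat.le_add_right _ _)).trans hAT
  have hpointwise : ∀ ω, blockDefect (M ω) k A + M ω T ≤
      ∑ z ∈ A, ((k : ℝ) ^ d)⁻¹ * M (z +ᵥ ω) (block d k) + ∑ z ∈ T \ S, M (z +ᵥ ω) {0} := fun ω => by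
    simp only [← hM.blockMean_eq, ← hM.apply_singleton]
    refine (hM.isSubadditive ω).blockDefect_add_le ?_ ?_
    · rw [hA, centeredCube_add]
      exact Icc_sub_block_subset k _ _
    · rw [hT, centeredCube_add]
      exact Icc_add_block_subset k _ _
  have hblock := (hM.integrable (block d k)).const_mul ((k : ℝ) ^ d)⁻¹
  have hintegral := integral_mono
    (((hM.isSuperadditiveProcess_blockDefect k).integrable A).add (hM.integrable T))
    ((integrable_finsetSum A fun z _ => integrable_comp_vadd hblock z).add
      (integrable_finsetSum (T \ S) fun z _ => integrable_comp_vadd (hM.integrable {0}) z))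
    hpointwise
  rw [integral_add' ((hM.isSuperadditiveProcess_blockDefect k).integrable A) (hM.integrable T),
    integral_add' (integrable_finsetSum A fun z _ => integrable_comp_vadd hblock z)
      (integrable_finsetSum (T \ S) fun z _ => integrable_comp_vadd (hM.integrable {0}) z),
    integral_sum_vadd hblock, integral_sum_vadd (hM.integrable {0}), integral_const_mul,
    Finset.cast_card_sdiff hST] at hintegral
  have hcard : timeConstant P M * A.card ≤ timeConstant P M * T.card :=
    mul_le_mul_of_nonneg_left (Nat.cast_le.2 (Finset.card_le_card hAT)) hM.timeConstant_nonneg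
  linarith [hM.timeConstant_mul_card_le (N + k + k)]

lemma eventually_integral_blockDefect_le (hM : IsSubadditiveProcess P M) (k : ℕ) [NeZero k] {δ : ℝ}
    (hδ : ((k : ℝ) ^ d)⁻¹ * ∫ ω, M ω (block d k) ∂P < timeConstant P M + δ) :
    ∀ᶠ N in atTop,
      ∫ ω, blockDefect (M ω) k (centeredCube d N) ∂P ≤ δ * (centeredCube d N).card := by
  set J := ((k : ℝ) ^ d)⁻¹ * ∫ ω, M ω (block d k) ∂P
  have hlim := ((tendsto_card_centeredCube_add_div_card d (k + k)).sub_const 1).const_mul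
    (∫ ω, M ω {0} ∂P)
  rw [sub_self, mul_zero] at hlim
  rw [← map_add_atTop_eq_nat k, eventually_map]
  filter_upwards [hlim.eventually_lt_const (show 0 < timeConstant P M + δ - J by linarith)]
    with N hN
  have hpos := card_centeredCube_pos (d := d) N
  rw [div_sub_one hpos.ne', mul_div_assoc', div_lt_iff₀ hpos, ← add_assoc] at hN
  have hmono : ((centeredCube d N).card : ℝ) ≤ (centeredCube d (N + k)).card := by
    rw [card_centeredCube, card_centeredCube]
    gcongr
    exact Nat.le_add_right N k
  have hslack : (timeConstant P M + δ - J) * (centeredCube d N).card ≤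
      (timeConstant P M + δ - J) * (centeredCube d (N + k)).card :=
    mul_le_mul_of_nonneg_left hmono (by linarith)
  linarith [hM.integral_blockDefect_le k N]

end Invariant

theorem ae_hasBoxDensity [IsProbabilityMeasure P] [ErgodicVAdd (Zd d) Ω P]
    (hM : IsSubadditiveProcess P M) : ∀ᵐ ω ∂P, HasBoxDensity (M ω) (timeConstant P M) := by
  have hmean : ∀ k : ℕ+, ∀ᵐ ω ∂P, HasBoxDensity (blockMean (M ω) k)
      (((k : ℝ) ^ d)⁻¹ * ∫ ω, M ω (block d k) ∂P) := fun k => by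
    rw [← integral_const_mul]
    filter_upwards [hasErgodicMean_of_integrable (d := d) ((hM.integrable (block d k)).const_mul _)]
      with ω hω
    exact funext (hM.blockMean_eq k ω) ▸ hω
  have hdefect := ae_forall_pos_exists_densityLE (P := P)
    (G := fun (k : ℕ+) ω => blockDefect (M ω) k)
    (e := fun k : ℕ+ => ((k : ℝ) ^ d)⁻¹ * ∫ ω, M ω (block d k) ∂P - timeConstant P M)
    fun δ hδ => by
      obtain ⟨k, hk⟩ := exists_lt_of_ciInf_lt (lt_add_of_pos_right (timeConstant P M) hδ)
      exact ⟨k, by linarith, hM.isSuperadditiveProcess_blockDefect k, hmean k,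
        hM.eventually_integral_blockDefect_le k hk⟩
  filter_upwards [hdefect, hasErgodicMean_of_integrable (d := d) (hM.integrable {0})]
    with ω hω hsingle
  simp only [← hM.apply_singleton] at hsingle
  refine (hM.isSubadditive ω).hasBoxDensity hsingle fun ε hε => ?_
  obtain ⟨k, hk, hmean_k, hdefect_k⟩ := hω ε hε
  exact ⟨k, _, by rwa [abs_of_nonneg (sub_nonneg.2 (hM.timeConstant_le k))], hmean_k, hdefect_k⟩

end IsSubadditiveProcess

end Subadditive

/-! ### Discrete energies -/

@[simp]
lemma toRd_apply (z : Zd d) (i : Fin d) : toRd z i = z i := rfl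

lemma toRd_add (z w : Zd d) : toRd (z + w) = toRd z + toRd w := by
  ext i
  simp

@[simp]
lemma toRd_zero : toRd (0 : Zd d) = 0 := by
  ext i
  simp

section Energy

variable {Ω : Type*} {τ : Zd d → Ω → Ω} {E0 : Finset (Zd d)} {V : Zd d → Ω → Rn n → ℝ} {ω : Ω}
  {F : Rd d →L[ℝ] Rn n} {u v φ ψ : Zd d → Rn n} {A A₁ A₂ : Set (Rd d)} {S S₁ S₂ : Finset (Zd d)}

lemma energy1_eq_sum (hS : toRd ⁻¹' A = S) :
    energy1 τ E0 V ω u A =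
      ∑ z ∈ S, ∑ b ∈ E0, V b (τ z ω) ((‖toRd b‖)⁻¹ • (u (z + b) - u z)) := by
  have hmem : ∀ z, toRd z ∈ A ↔ z ∈ S := Set.ext_iff.1 hS
  rw [energy1, tsum_eq_sum fun z hz => if_neg (mt (hmem z).1 hz)]
  exact Finset.sum_congr rfl fun z hz => if_pos ((hmem z).2 hz)

lemma energy1_congr (h : ∀ z, toRd z ∈ A → ∀ b ∈ E0, u (z + b) - u z = v (z + b) - v z) :
    energy1 τ E0 V ω u A = energy1 τ E0 V ω v A :=
  tsum_congr fun z => by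
    split_ifs with hz
    · exact Finset.sum_congr rfl fun b hb => by rw [h z hz b hb]
    · rfl

lemma energy1_union (h₁ : toRd ⁻¹' A₁ = S₁) (h₂ : toRd ⁻¹' A₂ = S₂) (hS : Disjoint S₁ S₂) :
    energy1 τ E0 V ω u (A₁ ∪ A₂) = energy1 τ E0 V ω u A₁ + energy1 τ E0 V ω u A₂ := by
  have h : toRd ⁻¹' (A₁ ∪ A₂) = (S₁ ∪ S₂ : Finset (Zd d)) := by
    rw [preimage_union, h₁, h₂, Finset.coe_union]
  rw [energy1_eq_sum h, energy1_eq_sum h₁, energy1_eq_sum h₂, Finset.sum_union hS]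

lemma energy1_vadd (hτ : ∀ x y : Zd d, τ (x + y) = τ x ∘ τ y) (w : Zd d) :
    energy1 τ E0 V ω u (toRd w +ᵥ A) = energy1 τ E0 V (τ w ω) (fun z => u (w + z)) A := by
  rw [energy1, ← (Equiv.addLeft w).tsum_eq]
  simp only [Equiv.coe_addLeft, toRd_add, ← vadd_eq_add (toRd w), vadd_mem_vadd_set_iff]
  simp only [add_comm w, hτ, Function.comp_apply, add_right_comm _ w, energy1]

lemma energy1_nonneg (hV : ∀ b ∈ E0, ∀ ω r, 0 ≤ V b ω r) : 0 ≤ energy1 τ E0 V ω u A :=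
  tsum_nonneg fun z => by
    split_ifs
    · exact Finset.sum_nonneg fun b hb => hV b hb _ _
    · exact le_rfl

lemma irange_nonneg : 0 ≤ irange d E0 := le_max_of_le_left (by positivity)

lemma norm_le_irange {b : Zd d} (hb : b ∈ E0) : ‖toRd b‖ ≤ irange d E0 :=
  le_max_of_le_right (le_csSup (E0.finite_toSet.image _).bddAbove ⟨b, hb, rfl⟩)

/-- The admissible perturbations in the definition of `mF`: those that vanish within distance
`irange d E0` of the complement of `A`. -/
def IsAdmissible (E0 : Finset (Zd d)) (A : Set (Rd d)) (φ : Zd d → Rn n) : Prop :=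
  ∀ z, infDist (toRd z) Aᶜ ≤ irange d E0 → φ z = 0

lemma isAdmissible_zero : IsAdmissible E0 A (0 : Zd d → Rn n) := fun _ _ => rfl

instance : Nonempty {φ : Zd d → Rn n // IsAdmissible E0 A φ} := ⟨⟨0, isAdmissible_zero⟩⟩

lemma IsAdmissible.add (hφ : IsAdmissible E0 A φ) (hψ : IsAdmissible E0 A ψ) :
    IsAdmissible E0 A (φ + ψ) := fun z hz => by
  rw [Pi.add_apply, hφ z hz, hψ z hz, add_zero]

lemma IsAdmissible.mono (hφ : IsAdmissible E0 A₁ φ) (h : A₁ ⊆ A₂) (hA₂ : A₂ᶜ.Nonempty) :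
    IsAdmissible E0 A₂ φ := fun z hz =>
  hφ z ((infDist_le_infDist_of_subset (compl_subset_compl.2 h) hA₂).trans hz)

lemma IsAdmissible.apply_add_eq_zero (hφ : IsAdmissible E0 A φ) {z b : Zd d} (hz : toRd z ∉ A)
    (hb : ‖toRd b‖ ≤ irange d E0) : φ (z + b) = 0 := by
  refine hφ _ ((infDist_le_dist_of_mem (show toRd z ∈ Aᶜ from hz)).trans ?_)
  rwa [toRd_add, dist_eq_norm, add_sub_cancel_left]

lemma IsAdmissible.apply_add_sub_eq_zero (hφ : IsAdmissible E0 A φ) {z b : Zd d}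
    (hz : toRd z ∉ A) (hb : b ∈ E0) : φ (z + b) - φ z = 0 := by
  have hz0 := hφ.apply_add_eq_zero (b := 0) hz (by simpa using irange_nonneg)
  rw [add_zero] at hz0
  rw [hφ.apply_add_eq_zero hz (norm_le_irange hb), hz0, sub_zero]

lemma isAdmissible_vadd_iff (w : Zd d) :
    IsAdmissible E0 (toRd w +ᵥ A) φ ↔ IsAdmissible E0 A fun z => φ (w + z) := by
  have hdist : ∀ z, infDist (toRd (w + z)) (toRd w +ᵥ A)ᶜ = infDist (toRd z) Aᶜ := fun z => by
    rw [← vadd_set_compl, toRd_add, ← vadd_eq_add, infDist, infEDist_vadd, infDist]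
  refine (Equiv.addLeft w).forall_congr_right.symm.trans (forall_congr' fun z => ?_)
  rw [Equiv.coe_addLeft, hdist]

lemma mF_eq_iInf : mF τ E0 V ω F A =
    ⨅ φ : {φ : Zd d → Rn n // IsAdmissible E0 A φ},
      energy1 τ E0 V ω (fun z => F (toRd z) + φ.1 z) A := rfl

lemma mF_nonneg (hV : ∀ b ∈ E0, ∀ ω r, 0 ≤ V b ω r) : 0 ≤ mF τ E0 V ω F A :=
  Real.iInf_nonneg fun _ => energy1_nonneg hV

lemma mF_le_energy1 (hV : ∀ b ∈ E0, ∀ ω r, 0 ≤ V b ω r) (hφ : IsAdmissible E0 A φ) :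
    mF τ E0 V ω F A ≤ energy1 τ E0 V ω (fun z => F (toRd z) + φ z) A :=
  ciInf_le ⟨0, Set.forall_mem_range.2 fun _ => energy1_nonneg hV⟩
    (⟨φ, hφ⟩ : {φ : Zd d → Rn n // IsAdmissible E0 A φ})

lemma mF_vadd (hτ : ∀ x y : Zd d, τ (x + y) = τ x ∘ τ y) (w : Zd d) (ω : Ω)
    (F : Rd d →L[ℝ] Rn n) (A : Set (Rd d)) :
    mF τ E0 V (τ w ω) F A = mF τ E0 V ω F (toRd w +ᵥ A) := by
  refine (Equiv.iInf_congr (((Equiv.addLeft w).arrowCongr (Equiv.refl _)).symm.subtypeEquiv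
    fun φ => isAdmissible_vadd_iff w) fun φ => ?_).symm
  rw [energy1_vadd hτ]
  refine energy1_congr fun z _ b _ => ?_
  simp only [toRd_add, map_add]
  change F (toRd z) + F (toRd b) + φ.1 (w + (z + b)) - (F (toRd z) + φ.1 (w + z)) = _
  abel

lemma compl_nonempty_of_preimage_toRd_eq [NeZero d] (hS : toRd ⁻¹' A = S) : Aᶜ.Nonempty := by
  obtain ⟨z, hz⟩ := Infinite.exists_notMem_finset S
  exact ⟨toRd z, fun h => hz (hS.subset h)⟩

lemma mF_union_le [NeZero d] (hV : ∀ b ∈ E0, ∀ ω r, 0 ≤ V b ω r) (h₁ : toRd ⁻¹' A₁ = S₁)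
    (h₂ : toRd ⁻¹' A₂ = S₂) (hA : Disjoint A₁ A₂) :
    mF τ E0 V ω F (A₁ ∪ A₂) ≤ mF τ E0 V ω F A₁ + mF τ E0 V ω F A₂ := by
  have hS : Disjoint S₁ S₂ := by
    rw [← Finset.disjoint_coe, ← h₁, ← h₂]
    exact hA.preimage _
  have hcompl : (A₁ ∪ A₂)ᶜ.Nonempty :=
    compl_nonempty_of_preimage_toRd_eq (S := S₁ ∪ S₂) <| by
      rw [preimage_union, h₁, h₂, Finset.coe_union]
  rw [mF_eq_iInf (A := A₁), mF_eq_iInf (A := A₂)]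
  refine le_ciInf_add_ciInf fun ⟨φ₁, (hφ₁ : IsAdmissible E0 A₁ φ₁)⟩
    ⟨φ₂, (hφ₂ : IsAdmissible E0 A₂ φ₂)⟩ => ?_
  refine (mF_le_energy1 hV ((hφ₁.mono subset_union_left hcompl).add
    (hφ₂.mono subset_union_right hcompl))).trans_eq ?_
  rw [energy1_union h₁ h₂ hS]
  congr 1
  · refine energy1_congr fun z hz b hb => ?_
    have := hφ₂.apply_add_sub_eq_zero (disjoint_left.1 hA hz) hb
    simp only [Pi.add_apply]
    rw [sub_eq_zero.1 this]
    abel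
  · refine energy1_congr fun z hz b hb => ?_
    have := hφ₁.apply_add_sub_eq_zero (disjoint_right.1 hA hz) hb
    simp only [Pi.add_apply]
    rw [sub_eq_zero.1 this]
    abel

/-- The energy of the affine function `x ↦ F x` per lattice point, seen from the origin. -/
def affineEnergy (E0 : Finset (Zd d)) (V : Zd d → Ω → Rn n → ℝ) (F : Rd d →L[ℝ] Rn n)
    (ω : Ω) : ℝ :=
  ∑ b ∈ E0, V b ω ((‖toRd b‖)⁻¹ • F (toRd b))

lemma mF_le_sum_affineEnergy (hV : ∀ b ∈ E0, ∀ ω r, 0 ≤ V b ω r) (hS : toRd ⁻¹' A = S) :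
    mF τ E0 V ω F A ≤ ∑ z ∈ S, affineEnergy E0 V F (τ z ω) := by
  refine (mF_le_energy1 hV isAdmissible_zero).trans_eq ?_
  simp [energy1_eq_sum hS, affineEnergy, toRd_add]

lemma mF_le_add_sum_sdiff [NeZero d] (hV : ∀ b ∈ E0, ∀ ω r, 0 ≤ V b ω r)
    (h₁ : toRd ⁻¹' A₁ = S₁) (h₂ : toRd ⁻¹' A₂ = S₂) (hA : A₁ ⊆ A₂) :
    mF τ E0 V ω F A₂ ≤ mF τ E0 V ω F A₁ + ∑ z ∈ S₂ \ S₁, affineEnergy E0 V F (τ z ω) := by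
  have hdiff : toRd ⁻¹' (A₂ \ A₁) = (S₂ \ S₁ : Finset (Zd d)) := by
    rw [preimage_sdiff, h₁, h₂, Finset.coe_sdiff]
  have hunion := mF_union_le (τ := τ) (ω := ω) (F := F) hV h₁ hdiff disjoint_sdiff_right
  rw [union_sdiff_cancel hA] at hunion
  exact hunion.trans (by grw [mF_le_sum_affineEnergy hV hdiff])

lemma measurable_iInf_of_continuous [MeasurableSpace Ω] {X : Type*} [TopologicalSpace X]
    [TopologicalSpace.SeparableSpace X] {f : Ω → X → ℝ} (hmeas : ∀ x, Measurable (f · x))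
    (hcont : ∀ ω, Continuous (f ω)) : Measurable fun ω => ⨅ x, f ω x := by
  obtain ⟨D, hD, hdense⟩ := TopologicalSpace.exists_countable_dense X
  have := hD.to_subtype
  simp only [← hdense.ciInf' (hcont _)]
  exact Measurable.iInf fun x : D => hmeas x

lemma measurable_mF [MeasurableSpace Ω] (hτ : ∀ z, Measurable (τ z))
    (hVm : ∀ b ∈ E0, ∀ r, Measurable (V b · r))
    (hVc : ∀ b ∈ E0, ∀ ω, Continuous (V b ω)) (hS : toRd ⁻¹' A = S) :
    Measurable fun ω => mF τ E0 V ω F A := by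
  have : SecondCountableTopology {φ : Zd d → Rn n // IsAdmissible E0 A φ} :=
    TopologicalSpace.Subtype.secondCountableTopology {φ | IsAdmissible E0 A φ}
  simp only [mF_eq_iInf]
  refine measurable_iInf_of_continuous (fun φ => ?_) fun ω => ?_
  · simp only [energy1_eq_sum hS]
    exact Finset.measurable_sum _ fun z _ => Finset.measurable_sum _ fun b hb =>
      (hVm b hb _).comp (hτ z)
  · simp only [energy1_eq_sum hS]
    have heval : ∀ z : Zd d, Continuous fun φ : {φ : Zd d → Rn n // IsAdmissible E0 A φ} =>
        F (toRd z) + φ.1 z := fun z =>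
      continuous_const.add ((continuous_apply z).comp continuous_subtype_val)
    exact continuous_finsetSum _ fun z _ => continuous_finsetSum _ fun b hb =>
      (hVc b hb _).comp (((heval (z + b)).sub (heval z)).const_smul ‖toRd b‖⁻¹)

end Energy

/-! ### Rescaled boxes -/

/-- The union of the half-open unit cubes `z + [0, 1)ᵈ`, `z ∈ S`. -/
def cell (S : Finset (Zd d)) : Set (Rd d) := {x | (fun i => ⌊x i⌋) ∈ S}

lemma preimage_toRd_cell (S : Finset (Zd d)) : toRd ⁻¹' cell S = S := by
  ext z
  simp [cell]

lemma cell_union (S T : Finset (Zd d)) : cell (S ∪ T) = cell S ∪ cell T := by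
  ext x
  simp [cell]

lemma disjoint_cell {S T : Finset (Zd d)} (h : Disjoint S T) : Disjoint (cell S) (cell T) :=
  disjoint_left.2 fun _ hS hT => Finset.disjoint_left.1 h hS hT

lemma cell_vadd (w : Zd d) (S : Finset (Zd d)) : cell (w +ᵥ S) = toRd w +ᵥ cell S := by
  ext x
  have hfloor : (fun i => ⌊(-toRd w +ᵥ x) i⌋) = -w +ᵥ fun i => ⌊x i⌋ := by
    ext i
    simp [← Int.cast_neg]
  rw [mem_vadd_set_iff_neg_vadd_mem, cell, cell, mem_ofPred_eq, mem_ofPred_eq, hfloor,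
    Finset.neg_vadd_mem_iff]

lemma cube_eq_cell_block (d k : ℕ) : cube d k = cell (block d k) := by
  ext x
  simp [cube, cell, mem_block, Int.floor_lt, Int.floor_nonneg]

lemma mem_smul_closedBox {a b : Fin d → ℝ} {t : ℝ} (ht : 0 < t) {x : Rd d} :
    x ∈ t • closedBox a b ↔ ∀ i, t * a i ≤ x i ∧ x i ≤ t * b i := by
  simp [mem_smul_set_iff_inv_smul_mem₀ ht.ne', closedBox, le_inv_mul_iff₀ ht, inv_mul_le_iff₀ ht]

lemma preimage_toRd_smul_closedBox {a b : Fin d → ℝ} {t : ℝ} (ht : 0 < t) :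
    toRd ⁻¹' (t • closedBox a b) =
      Finset.Icc (fun i => ⌈t * a i⌉) fun i => ⌊t * b i⌋ := by
  ext z
  simp [mem_smul_closedBox ht, Pi.le_def, Int.ceil_le, Int.le_floor, forall_and]

lemma cell_subset_smul_closedBox {a b : Fin d → ℝ} {t : ℝ} (ht : 0 < t) :
    cell (Finset.Icc (fun i => ⌈t * a i⌉) ((fun i => ⌊t * b i⌋) - 1)) ⊆ t • closedBox a b := by
  intro x hx
  obtain ⟨hlow, hup⟩ := Finset.mem_Icc.1 hx
  exact (mem_smul_closedBox ht).2 fun i => ⟨(Int.ceil_le.1 (hlow i)).trans (Int.floor_le _),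
    (Int.floor_lt.1 (Int.le_sub_one_iff.1 (hup i))).le.trans (Int.floor_le _)⟩

lemma smul_closedBox_subset_cell {a b : Fin d → ℝ} {t : ℝ} (ht : 0 < t) :
    t • closedBox a b ⊆ cell (Finset.Icc (fun i => ⌊t * a i⌋) fun i => ⌊t * b i⌋) := fun _ hx =>
  Finset.mem_Icc.2 ⟨fun i => Int.floor_mono ((mem_smul_closedBox ht).1 hx i).1,
    fun i => Int.floor_mono ((mem_smul_closedBox ht).1 hx i).2⟩

lemma hasSlope_floor (a : Fin d → ℝ) : HasSlope (fun t i => ⌊t * a i⌋) a :=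
  hasSlope_of_abs_sub_le (C := 1) fun t i => by
    rw [abs_le]
    constructor <;> linarith [Int.floor_le (t * a i), Int.lt_floor_add_one (t * a i)]

lemma hasSlope_ceil (a : Fin d → ℝ) : HasSlope (fun t i => ⌈t * a i⌉) a :=
  hasSlope_of_abs_sub_le (C := 1) fun t i => by
    rw [abs_le]
    constructor <;> linarith [Int.le_ceil (t * a i), Int.ceil_lt_add_one (t * a i)]

lemma toReal_volume_closedBox {a b : Fin d → ℝ} (hab : a ≤ b) :
    (volume (closedBox a b)).toReal = ∏ i, (b i - a i) := by
  have hpre : closedBox a b = (WithLp.ofLp : Rd d → Fin d → ℝ) ⁻¹' Set.Icc a b := by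
    ext x
    simp [closedBox, Pi.le_def, forall_and]
  rw [hpre, (PiLp.volume_preserving_ofLp (Fin d)).measure_preimage
    measurableSet_Icc.nullMeasurableSet, Real.volume_Icc_pi_toReal hab]

lemma tendsto_mF_smul_closedBox [NeZero d] {Ω : Type*} {τ : Zd d → Ω → Ω} {E0 : Finset (Zd d)}
    {V : Zd d → Ω → Rn n → ℝ} {F : Rd d →L[ℝ] Rn n} {ω : Ω} {c s : ℝ}
    (hV : ∀ b ∈ E0, ∀ ω r, 0 ≤ V b ω r)
    (hmF : HasBoxDensity (fun S => mF τ E0 V ω F (cell S)) c)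
    (haffine : HasBoxDensity (fun S => ∑ z ∈ S, affineEnergy E0 V F (τ z ω)) s)
    {a b : Fin d → ℝ} (hab : ∀ i, a i < b i) :
    Tendsto (fun t : ℝ => mF τ E0 V ω F (t • closedBox a b) / t ^ d) atTop
      (𝓝 (c * ∏ i, (b i - a i))) := by
  have hlower := (hmF hab (hasSlope_floor a) (hasSlope_floor b)).sub
    (haffine.tendsto_sum_sdiff hab (hasSlope_floor a) (hasSlope_floor b) (hasSlope_ceil a)
      (hasSlope_floor b))
  have hupper := (hmF hab (hasSlope_ceil a) ((hasSlope_floor b).sub_const 1)).add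
    (haffine.tendsto_sum_sdiff hab (hasSlope_ceil a) (hasSlope_floor b) (hasSlope_ceil a)
      ((hasSlope_floor b).sub_const 1))
  rw [sub_zero] at hlower
  rw [add_zero] at hupper
  refine tendsto_of_tendsto_of_tendsto_of_le_of_le' hlower hupper ?_ ?_ <;>
    filter_upwards [eventually_gt_atTop 0] with t ht
  · rw [← sub_div]
    gcongr
    exact sub_le_iff_le_add.2 (mF_le_add_sum_sdiff hV (preimage_toRd_smul_closedBox ht)
      (preimage_toRd_cell _) (smul_closedBox_subset_cell ht))
  · rw [← add_div]
    gcongr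
    exact mF_le_add_sum_sdiff hV (preimage_toRd_cell _) (preimage_toRd_smul_closedBox ht)
      (cell_subset_smul_closedBox ht)

section LocalizedEnergy

variable {E0 : Finset (Zd d)} {V : Zd d → Ω → Rn n → ℝ} {F : Rd d →L[ℝ] Rn n} {P : Measure Ω}

lemma W0_eq_timeConstant (τ : Zd d → Ω → Ω) :
    W0 P τ E0 V F = timeConstant P fun ω S => mF τ E0 V ω F (cell S) := by
  simp only [W0, timeConstant, cube_eq_cell_block]
  rfl

lemma isSubadditiveProcess_mF [NeZero d] [AddAction (Zd d) Ω] [MeasurableConstVAdd (Zd d) Ω]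
    [VAddInvariantMeasure (Zd d) Ω P] (hVm : ∀ b ∈ E0, ∀ r, Measurable (V b · r))
    (hVc : ∀ b ∈ E0, ∀ ω, Continuous (V b ω)) (hV : ∀ b ∈ E0, ∀ ω r, 0 ≤ V b ω r)
    (hint : Integrable (affineEnergy E0 V F) P) :
    IsSubadditiveProcess P fun ω S => mF (fun z : Zd d => (z +ᵥ ·)) E0 V ω F (cell S) where
  isSubadditive ω :=
    { nonneg := fun S => mF_nonneg hV
      empty := le_antisymm ((mF_le_sum_affineEnergy hV (preimage_toRd_cell ∅)).trans_eq
        Finset.sum_empty) (mF_nonneg hV)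
      union_le := fun S T hST => by
        rw [cell_union]
        exact mF_union_le hV (preimage_toRd_cell S) (preimage_toRd_cell T) (disjoint_cell hST) }
  vadd_apply w ω S := by
    rw [cell_vadd, ← mF_vadd fun x y => funext fun ω => add_vadd x y ω]
  integrable S := by
    have hmeas := measurable_mF (F := F) (fun z : Zd d => measurable_const_vadd z) hVm hVc
      (preimage_toRd_cell S)
    refine (integrable_finsetSum S fun z _ => integrable_comp_vadd hint z).mono'
      hmeas.aestronglyMeasurable (Eventually.of_forall fun ω => ?_)
    rw [Real.norm_of_nonneg (mF_nonneg hV)]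
    exact mF_le_sum_affineEnergy hV (preimage_toRd_cell S)

end LocalizedEnergy

lemma ergodicVAdd_of_forall_preimage_eq {G : Type*} [AddGroup G] [Countable G] [AddAction G Ω]
    [MeasurableConstVAdd G Ω] {P : Measure Ω} [VAddInvariantMeasure G Ω P]
    (h : ∀ s, MeasurableSet s → (∀ g : G, (g +ᵥ ·) ⁻¹' s = s) → EventuallyConst s (ae P)) :
    ErgodicVAdd G Ω P where
  aeconst_of_forall_preimage_vadd_ae_eq {s} hs hinv := by
    set core := ⋂ g : G, (g +ᵥ ·) ⁻¹' s
    have hcore : core =ᵐ[P] s := by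
      simpa only [iInter_const] using Filter.EventuallyEq.countable_iInter hinv
    refine (h core (.iInter fun g => measurable_const_vadd g hs) fun g => ?_).congr hcore
    ext ω
    simp only [core, Set.mem_preimage, mem_iInter, vadd_vadd]
    exact (Equiv.addRight g).forall_congr_right (q := fun g' => g' +ᵥ ω ∈ s)

lemma integrable_of_lintegral_rpow_lt_top {P : Measure Ω} [IsFiniteMeasure P] {f : Ω → ℝ}
    (hf : Measurable f) (hf0 : ∀ ω, 0 ≤ f ω) {α : ℝ} (hα : 1 ≤ α)
    (hfα : ∫⁻ ω, ENNReal.ofReal (f ω ^ α) ∂P < ⊤) : Integrable f P := by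
  have hpow : Integrable (fun ω => f ω ^ α) P := ⟨(hf.pow_const α).aestronglyMeasurable,
    (hasFiniteIntegral_iff_ofReal (.of_forall fun ω => Real.rpow_nonneg (hf0 ω) α)).2 hfα⟩
  refine ((integrable_const (1 : ℝ)).add hpow).mono' hf.aestronglyMeasurable
    (.of_forall fun ω => ?_)
  rw [Real.norm_of_nonneg (hf0 ω), Pi.add_apply]
  rcases le_total (f ω) 1 with h | h
  · linarith [Real.rpow_nonneg (hf0 ω) α]
  · linarith [Real.self_le_rpow_of_one_le h hα]

lemma integrable_of_le_growth {P : Measure Ω} [IsFiniteMeasure P] {f lam : Ω → ℝ} {c C : ℝ}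
    (hf : Measurable f) (hf0 : ∀ ω, 0 ≤ f ω) (hlam : Integrable lam P)
    (hle : ∀ ω, f ω ≤ c * (1 + lam ω * C)) : Integrable f P := by
  refine (((integrable_const (1 : ℝ)).add (hlam.mul_const C)).const_mul c).mono'
    hf.aestronglyMeasurable (.of_forall fun ω => ?_)
  rw [Real.norm_of_nonneg (hf0 ω)]
  exact hle ω

theorem rescaled_mF_general
    {d n : ℕ} [NeZero d]
    {Ω : Type*} [MeasurableSpace Ω] (P : Measure Ω) [IsProbabilityMeasure P]
    (τ : Zd d → Ω → Ω) (hτ0 : τ 0 = id)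
    (hτadd : ∀ x y : Zd d, τ (x + y) = τ x ∘ τ y)
    (hτmp : ∀ z : Zd d, MeasurePreserving (τ z) P P)
    (hτerg : ∀ B : Set Ω, MeasurableSet B → (∀ z : Zd d, τ z ⁻¹' B = B) → P B = 0 ∨ P B = 1)
    (E0 : Finset (Zd d)) (_hE00 : (0 : Zd d) ∉ E0)
    (V : Zd d → Ω → Rn n → ℝ)
    (hVmeas : ∀ b ∈ E0, ∀ r, Measurable fun ω => V b ω r)
    (hVcont : ∀ b ∈ E0, ∀ ω : Ω, Continuous (V b ω))
    (hVnn : ∀ b ∈ E0, ∀ (ω : Ω) (r : Rn n), 0 ≤ V b ω r)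
    (F : Rd d →L[ℝ] Rn n)
    (hVint : ∀ b ∈ E0, Integrable (fun ω => V b ω ((‖toRd b‖)⁻¹ • F (toRd b))) P) :
    ∃ ΩF : Set Ω, MeasurableSet ΩF ∧ P ΩF = 1 ∧
      ∀ ω ∈ ΩF, ∀ a b : Fin d → ℝ, (∀ i, a i < b i) →
        Tendsto (fun ε : ℝ => ε ^ d * mF τ E0 V ω F (ε⁻¹ • closedBox a b))
          (𝓝[>] (0 : ℝ)) (𝓝 ((volume (closedBox a b)).toReal * W0 P τ E0 V F)) := by
  let _ : AddAction (Zd d) Ω :=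
    { vadd := τ, zero_vadd := congrFun hτ0, add_vadd := fun x y => congrFun (hτadd x y) }
  have : MeasurableConstVAdd (Zd d) Ω := ⟨fun z => (hτmp z).measurable⟩
  have : VAddInvariantMeasure (Zd d) Ω P :=
    ⟨fun z _ hs => (hτmp z).measure_preimage hs.nullMeasurableSet⟩
  have : ErgodicVAdd (Zd d) Ω P := ergodicVAdd_of_forall_preimage_eq fun B hB hinv =>
    eventuallyConst_set'.2 <| (hτerg B hB hinv).imp ae_eq_empty.2 fun h =>
      eventuallyEq_univ.2 ((mem_ae_iff_prob_eq_one hB).2 h)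
  have haffine : Integrable (affineEnergy E0 V F) P := integrable_finsetSum _ hVint
  obtain ⟨ΩF, hae, hmeas, hΩF⟩ :=
    ((isSubadditiveProcess_mF hVmeas hVcont hVnn haffine).ae_hasBoxDensity.and
      (hasErgodicMean_of_integrable (d := d) haffine)).exists_measurable_mem
  refine ⟨ΩF, hmeas, (mem_ae_iff_prob_eq_one hmeas).1 hae, fun ω hω a b hab => ?_⟩
  obtain ⟨hmF, hmean⟩ := hΩF ω hω
  rw [toReal_volume_closedBox fun i => (hab i).le, mul_comm, W0_eq_timeConstant]
  refine ((tendsto_mF_smul_closedBox hVnn hmF hmean hab).comp tendsto_inv_nhdsGT_zero).congr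
    fun ε => ?_
  simp only [Function.comp_apply, inv_pow, div_inv_eq_mul, mul_comm]
  rfl

/-- rescaled representation of the homogenized energy density,
Corollary 3.4 of the paper. -/
theorem rescaled_mF
    {d n : ℕ} (hd : 2 ≤ d) (hn : 1 ≤ n)
    {Ω : Type*} [MeasurableSpace Ω] (P : Measure Ω) [IsProbabilityMeasure P]
    (τ : Zd d → Ω → Ω) (hτ0 : τ 0 = id)
    (hτadd : ∀ x y : Zd d, τ (x + y) = τ x ∘ τ y)
    (hτmp : ∀ z : Zd d, MeasurePreserving (τ z) P P)
    (hτerg : ∀ B : Set Ω, MeasurableSet B → (∀ z : Zd d, τ z ⁻¹' B = B) → P B = 0 ∨ P B = 1)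
    (E0 : Finset (Zd d)) (hE00 : (0 : Zd d) ∉ E0) (hE0b : ∀ i : Fin d, stdb i ∈ E0)
    (p c₁ : ℝ) (hp : 1 < p) (hc₁ : 0 < c₁)
    (V : Zd d → Ω → Rn n → ℝ)
    (hVmeas : ∀ b ∈ E0, Measurable fun q : Ω × Rn n => V b q.1 q.2)
    (hVcont : ∀ b ∈ E0, ∀ ω : Ω, Continuous (V b ω))
    (hVnn : ∀ b ∈ E0, ∀ (ω : Ω) (r : Rn n), 0 ≤ V b ω r)
    (lam : Zd d → Ω → ℝ)
    (hlammeas : ∀ b ∈ E0, Measurable (lam b))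
    (hlamnn : ∀ b ∈ E0, ∀ ω : Ω, 0 ≤ lam b ω)
    (hgrowth : ∀ b ∈ E0, ∀ (ω : Ω) (r : Rn n),
      lam b ω * (‖r‖ ^ p / c₁ - c₁) ≤ V b ω r ∧ V b ω r ≤ c₁ * (1 + lam b ω * (‖r‖ ^ p + 1)))
    (α β : ℝ) (hα : 1 ≤ α) (hβ : 1 / (p - 1) ≤ β)
    (hmomα : ∀ b ∈ E0, ∫⁻ ω, ENNReal.ofReal (lam b ω ^ α) ∂P < ⊤)
    (hmomβ : ∀ i : Fin d, ∫⁻ ω, ENNReal.ofReal (lam (stdb i) ω) ^ (-β) ∂P < ⊤)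
    (F : Rd d →L[ℝ] Rn n) :
    ∃ ΩF : Set Ω, MeasurableSet ΩF ∧ P ΩF = 1 ∧
      ∀ ω ∈ ΩF, ∀ a b : Fin d → ℝ, (∀ i, a i < b i) →
        Tendsto (fun ε : ℝ => ε ^ d * mF τ E0 V ω F (ε⁻¹ • closedBox a b))
          (𝓝[>] (0 : ℝ)) (𝓝 ((volume (closedBox a b)).toReal * W0 P τ E0 V F)) := by
  have : NeZero d := ⟨by omega⟩
  have hVm : ∀ b ∈ E0, ∀ r, Measurable (V b · r) := fun b hb _ =>
    (hVmeas b hb).comp measurable_prodMk_right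
  exact rescaled_mF_general P τ hτ0 hτadd hτmp hτerg E0 hE00 V hVm hVcont hVnn F fun b hb =>
    integrable_of_le_growth (hVm b hb _) (fun ω => hVnn b hb ω _)
      (integrable_of_lintegral_rpow_lt_top (hlammeas b hb) (hlamnn b hb) hα (hmomα b hb))
      fun ω => (hgrowth b hb ω _).2

end StochHom
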